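/- arXiv:2107.13417 — 3 statements merged into one kernel-verified Lean document; each statement's English description precedes it below -/
import Mathlib

section
/- Let k ∈ ℕ, m ∈ ℤ≥0, λ ∈ (ℤ≥0)^k with n := |λ|, and c̲ ∈ {1,…,k}^m. If λ_i = n for some i ∈ {1,…,k}, then f_{λ,c̲} = 1 if both m = n and m = i_{c̲}, and f_{λ,c̲} = 0 otherwise. If instead λ_i < n for all i ∈ {1,…,k}, then (as an identity of rational numbers) f_{λ,c̲} = P_k(λ_1,…,λ_k, 1_{c̲},…,k_{c̲}) · Π_{i=1}^k (1/(n−λ_i))·C(n−λ_i, λ_i − i_{c̲}), where C(a,b) := 0 when b < 0. -/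
/-!
Unique oriented paths from the roots mean that roots have no parent, every other vertex has exactly
one parent, and the parent relation is well founded (`pathUnique_iff`).  Colored forests are rigid,
so the relabellings preserving a fixed coloring and fixed roots act freely on the forests with these
data, and the number of isomorphism classes is the number of such forests divided by
`∏ (λ_i - i_c)!` (`forestCount_mul_prod_factorial`).  Injectivity of the coloring says that a
forest with fixed coloring and roots is a family of injections, one for each color `i`, from the
non-roots of color `i` to the vertices of other colors, whose parent map is acyclic
(`ParentFamily.toForest_bijective`).

If `A` is the matrix of a parent map on the non-roots, then `det (1 - A)` is `1` when the map is
acyclic and `0` otherwise (`det_one_sub_parentMatrix`).  So the forests are counted by the sum of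
`det (1 - A)` over all families of injections.  Expand this determinant multilinearly in the rows.
A term using the `A`-rows of two vertices of the same color changes sign when their parents are
exchanged, hence contributes zero; in the other terms, the rows of `A` that occur belong to
different colors and are independent.  Hence the average of the determinants is the determinant at
the average of `A` (`sum_det_one_sub_parentMatrix`).

The averaged matrix factors through the colors, and `det (1 - BC) = det (1 - CB)` turns its
determinant into that of a rank-one perturbation of a diagonal matrix (`det_one_sub_meanMatrix`).
With `N = |λ|`, `x_i = λ_i` and `y_i = i_c` the result is
`(∏ (N - y_i) - ∑ (x_i - y_i) ∏_{j ≠ i} (N - y_j)) / ∏ (N - x_i)`, whose numerator, expanded in the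
`y_i`, is `P_k` (`Ppoly_eq`).

If all vertices have one color there are no arrows, every vertex is a root, and the count is
immediate (`forestCount_of_eq`).
-/

/- An `m`-rooted forest on vertex set `Fin n` with an injective `k`-coloring:
arrows `adj`, injective root order `root`, a coloring `color` such that every
vertex is reachable from a root by a unique oriented path, and the coloring is
injective on every closed out-neighborhood. -/
structure CForest (k m n : ℕ) where
  adj : Fin n → Fin n → Prop
  root : Fin m → Fin n
  color : Fin n → Fin k
  root_inj : Function.Injective root
  path_unique : ∀ v : Fin n, ∃! p : List (Fin n),
    List.Chain' adj p ∧ (∃ j : Fin m, p.head? = some (root j)) ∧ p.getLast? = some v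
  color_inj : ∀ v : Fin n, Set.InjOn color ({v} ∪ {w | adj v w})

/- Isomorphism of colored rooted forests: a directed-graph isomorphism preserving
the root order and the colors. -/
def CForest.Iso {k m n : ℕ} (F G : CForest k m n) : Prop :=
  ∃ e : Fin n ≃ Fin n, (∀ v w : Fin n, F.adj v w ↔ G.adj (e v) (e w)) ∧
    (∀ j : Fin m, e (F.root j) = G.root j) ∧ (∀ v : Fin n, G.color (e v) = F.color v)

/- `f_{λ,c̲}`: the number of isomorphism classes of `(λ,c̲)`-forests. -/
noncomputable def forestCount (k m : ℕ) (lam : Fin k → ℕ) (c : Fin m → Fin k) : ℕ :=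
  Nat.card (Quot (fun F G : {F : CForest k m (∑ i, lam i) //
    (∀ i : Fin k, (Finset.univ.filter (fun v => F.color v = i)).card = lam i) ∧
    (∀ j : Fin m, F.color (F.root j) = c j)} => CForest.Iso F.1 G.1))

/- `i_{c̲}` : the number of roots colored `i`. -/
def rootColorCount {k m : ℕ} (c : Fin m → Fin k) (i : Fin k) : ℕ :=
  (Finset.univ.filter (fun j => c j = i)).card

/- The key polynomial `P_k`, as a function on rational values. -/
def Ppoly (k : ℕ) (x y : Fin k → ℚ) : ℚ :=
  ∑ S : Finset (Fin k),
    if S = Finset.univ then (-1 : ℚ)^k * (1 - (k : ℚ)) * ∏ i : Fin k, y i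
    else (-1 : ℚ)^S.card * (∏ i ∈ S, y i) *
      (∑ i : Fin k, ((if i ∈ S then (1:ℚ) else 0) - (S.card : ℚ)) * x i) *
      (∑ i : Fin k, x i)^(k - S.card - 1)

/- Binomial coefficient `C(a,b)` with integer bottom, `0` when `b < 0`. -/
def chooseZ (a : ℕ) (b : ℤ) : ℚ := if 0 ≤ b then (a.choose b.toNat : ℚ) else 0


/-! ### Rooted paths and parent maps -/

/-- `p` lists the vertices of an oriented path from some root to `v`. -/
def IsRootPath {V ι : Type*} (adj : V → V → Prop) (r : ι → V) (v : V) (p : List V) : Prop :=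
  List.Chain' adj p ∧ (∃ j : ι, p.head? = some (r j)) ∧ p.getLast? = some v

/-- The local description of a rooted forest: roots have no parent, every other vertex has
exactly one, and there is no infinite ancestral line. -/
structure IsForest {V ι : Type*} (adj : V → V → Prop) (r : ι → V) : Prop where
  not_adj_root : ∀ j u, ¬ adj u (r j)
  parent : ∀ w, w ∉ Set.range r → ∃! u, adj u w
  wf : WellFounded adj

/-- A path from a root to `v` is either trivial or extends a path to a parent of `v`. -/
theorem isRootPath_iff {V ι : Type*} {adj : V → V → Prop} {r : ι → V} {v : V} {p : List V} :
    IsRootPath adj r v p ↔ (p = [v] ∧ v ∈ Set.range r) ∨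
      ∃ q u, p = q ++ [v] ∧ adj u v ∧ IsRootPath adj r u q := by
  rcases List.eq_nil_or_concat p with rfl | ⟨q, w, rfl⟩
  · simp [IsRootPath]
  · rcases List.eq_nil_or_concat q with rfl | ⟨q', u, rfl⟩
    · simp only [IsRootPath]
      constructor
      · rintro ⟨-, ⟨j, hj⟩, h⟩
        simp at hj h
        subst h
        exact Or.inl ⟨rfl, j, hj.symm⟩
      · rintro (⟨h, j, hj⟩ | ⟨q, u, h, -, -, -, h3⟩)
        · simp at h
          subst h
          exact ⟨by simp [List.Chain'], ⟨j, by simp [hj]⟩, by simp⟩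
        · have : q = [] := by
            have := congrArg List.length h
            simp at this
            exact this
          subst this
          simp at h3
    · simp only [IsRootPath, List.Chain', List.concat_eq_append]
      constructor
      · rintro ⟨h1, ⟨j, hj⟩, h⟩
        simp at h
        subst h
        refine Or.inr ⟨q' ++ [u], u, rfl, ?_, ?_, ⟨j, ?_⟩, by simp⟩
        · have := (List.isChain_append.1 h1).2.2
          exact this u (by simp) w (by simp)
        · exact (List.isChain_append.1 h1).1
        · cases q' <;> simpa using hj
      · rintro (⟨h, -⟩ | ⟨q, u', h, ha, h1, ⟨j, hj⟩, h3⟩)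
        · have := congrArg List.length h
          simp at this
        · have h := List.append_inj' h rfl
          obtain ⟨rfl, hw⟩ := h
          simp at hw h3
          subst hw h3
          refine ⟨List.isChain_append.2 ⟨h1, by simp, by simpa using ha⟩, ⟨j, ?_⟩, by simp⟩
          cases q' <;> simpa using hj

/-- Unique paths from the roots amount to the local description of a forest.  Well-foundedness comes
from path lengths, which increase along arrows; conversely paths are built by induction. -/
theorem pathUnique_iff {V ι : Type*} {adj : V → V → Prop} {r : ι → V} :
    (∀ v, ∃! p, IsRootPath adj r v p) ↔ IsForest adj r := by
  constructor
  · intro h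
    choose P hP hU using h
    have key : ∀ u v, adj u v → P v = P u ++ [v] := fun u v huv =>
      (hU v _ (isRootPath_iff.2 (Or.inr ⟨P u, u, rfl, huv, hP u⟩))).symm
    have hlast : ∀ v, (P v).getLast? = some v := fun v => (hP v).2.2
    have hroot : ∀ j, P (r j) = [r j] := fun j =>
      (hU _ _ (isRootPath_iff.2 (Or.inl ⟨rfl, j, rfl⟩))).symm
    refine ⟨?_, ?_, ?_⟩
    · intro j u hu
      have h1 := key _ _ hu
      rw [hroot] at h1
      have h2 := hlast u
      have : P u = [] := by
        have := congrArg List.length h1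
        simp at this
        exact this
      simp [this] at h2
    · intro w hw
      rcases isRootPath_iff.1 (hP w) with ⟨-, h⟩ | ⟨q, u, -, hu, -⟩
      · exact absurd h hw
      · refine ⟨u, hu, fun u' hu' => ?_⟩
        have h1 := (key _ _ hu).symm.trans (key _ _ hu')
        have h2 := List.append_cancel_right h1
        have h3 := hlast u
        rw [h2, hlast u'] at h3
        exact Option.some.inj h3
    · refine Subrelation.wf (r := InvImage (· < ·) fun v => (P v).length) ?_
        (InvImage.wf _ wellFounded_lt)
      intro u v huv
      simp [InvImage, key _ _ huv]
  · intro h v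
    induction v using h.wf.induction with
    | _ v ih =>
    by_cases hv : v ∈ Set.range r
    · refine ⟨[v], isRootPath_iff.2 (Or.inl ⟨rfl, hv⟩), fun p hp => ?_⟩
      rcases isRootPath_iff.1 hp with ⟨h1, -⟩ | ⟨q, u, -, hu, -⟩
      · exact h1
      · obtain ⟨j, rfl⟩ := hv
        exact absurd hu (h.not_adj_root j u)
    · obtain ⟨u, hu, huu⟩ := h.parent v hv
      obtain ⟨q, hq, hqq⟩ := ih u hu
      refine ⟨q ++ [v], isRootPath_iff.2 (Or.inr ⟨q, u, rfl, hu, hq⟩), fun p hp => ?_⟩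
      rcases isRootPath_iff.1 hp with ⟨-, h1⟩ | ⟨q', u', rfl, hu', hq'⟩
      · exact absurd h1 hv
      · obtain rfl := huu u' hu'
        rw [hqq q' hq']

/-! ### Determinants of parent maps -/

/-- The parent relation on `V` of a map `p` sending every non-root to its parent. -/
def parentRel {V ι : Type*} {r : ι → V} (p : {v // v ∉ Set.range r} → V) (u w : V) : Prop :=
  ∃ h : w ∉ Set.range r, p ⟨w, h⟩ = u

open Classical in
/-- The matrix of a parent map: the row of a non-root `v` is the indicator of its parent, and
is zero when that parent is a root. -/
noncomputable def parentMatrix {V ι : Type*} {r : ι → V} (p : {v // v ∉ Set.range r} → V) :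
    Matrix {v // v ∉ Set.range r} {v // v ∉ Set.range r} ℚ :=
  fun v w => if p v = w then 1 else 0

open Classical in
/-- `det (1 - A)` detects acyclicity of a parent map with matrix `A`: if there is no cycle, `A` is
strictly triangular with respect to the rank of the parent relation; otherwise the indicator of
the vertices without a finite ancestral line is fixed by `A`. -/
theorem det_one_sub_parentMatrix {V ι : Type*} [Fintype V] {r : ι → V}
    (p : {v // v ∉ Set.range r} → V) :
    (1 - parentMatrix p).det = if WellFounded (parentRel p) then 1 else 0 := by
  split_ifs with h
  · have : IsWellFounded V (parentRel p) := ⟨h⟩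
    let b : {v // v ∉ Set.range r} → Ordinalᵒᵈ := fun v =>
      OrderDual.toDual (IsWellFounded.rank (parentRel p) v.1)
    have key : ∀ v w : {v // v ∉ Set.range r}, p v = w → b v < b w := by
      intro v w hvw
      exact OrderDual.toDual_lt_toDual.2
        (IsWellFounded.rank_lt_of_rel (r := parentRel p) ⟨v.2, hvw⟩)
    have ht : (1 - parentMatrix p).BlockTriangular b := by
      intro v w hvw
      have h1 : v ≠ w := by rintro rfl; exact lt_irrefl _ hvw
      have h2 : ¬ p v = w := fun h => lt_asymm hvw (key v w h)
      simp [parentMatrix, h1, h2]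
    rw [ht.det]
    refine Finset.prod_eq_one fun a _ => ?_
    have : (1 - parentMatrix p).toSquareBlock b a = 1 := by
      ext v w
      have h2 : ¬ p v.1 = w.1 := fun h => by
        have := key _ _ h
        rw [v.2, w.2] at this
        exact lt_irrefl _ this
      simp [Matrix.toSquareBlock_def, parentMatrix, h2, Matrix.one_apply, Subtype.ext_iff]
    rw [this, Matrix.det_one]
  · rw [← Matrix.exists_mulVec_eq_zero_iff]
    have hex : ∃ v, ¬ Acc (parentRel p) v := by
      by_contra hcon
      push Not at hcon
      exact h ⟨hcon⟩
    have hroot : ∀ v, v ∈ Set.range r → Acc (parentRel p) v := fun v hv =>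
      Acc.intro _ fun u ⟨h, _⟩ => absurd hv h
    have hstep : ∀ v : {v // v ∉ Set.range r},
        Acc (parentRel p) v.1 ↔ Acc (parentRel p) (p v) := by
      intro v
      constructor
      · intro hv
        exact hv.inv ⟨v.2, rfl⟩
      · intro hv
        refine Acc.intro _ ?_
        rintro u ⟨_, rfl⟩
        exact hv
    refine ⟨fun v => if Acc (parentRel p) v.1 then 0 else 1, ?_, ?_⟩
    · obtain ⟨v, hv⟩ := hex
      intro h0
      have := congrFun h0 ⟨v, fun h => hv (hroot v h)⟩
      simp [hv] at this
    · rw [Matrix.sub_mulVec, Matrix.one_mulVec, sub_eq_zero]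
      ext v
      simp only [Matrix.mulVec, dotProduct, parentMatrix, hstep v]
      by_cases hp : p v ∈ Set.range r
      · rw [if_pos (hroot _ hp)]
        refine (Finset.sum_eq_zero fun w _ => ?_).symm
        have : ¬ p v = w.1 := fun h => w.2 (h ▸ hp)
        simp [this]
      · rw [Finset.sum_eq_single ⟨p v, hp⟩]
        · simp
        · intro w _ hw
          have : ¬ p v = w.1 := fun h => hw (Subtype.ext h.symm)
          simp [this]
        · simp

/-! ### Averaging over families of embeddings -/

open Classical in
/-- The value at a point of a uniformly random injection is uniformly distributed. -/
theorem sum_embedding_apply {A X : Type*} [Fintype A] [Fintype X] [Nonempty X] (a : A)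
    (Φ : X → ℚ) :
    ∑ g : A ↪ X, Φ (g a) = Fintype.card (A ↪ X) * ((∑ x, Φ x) / Fintype.card X) := by
  obtain ⟨x₀⟩ := ‹Nonempty X›
  let N : X → ℚ := fun x => ∑ g : A ↪ X, if g a = x then 1 else 0
  -- composing with a transposition shows that `g a` is equidistributed over `X`
  have hN : ∀ x, N x = N x₀ := by
    intro x
    refine Fintype.sum_equiv (Equiv.embeddingCongr (Equiv.refl A) (Equiv.swap x x₀)) _ _ ?_
    intro g
    have : (Equiv.embeddingCongr (Equiv.refl A) (Equiv.swap x x₀)) g a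
        = Equiv.swap x x₀ (g a) := rfl
    rw [this]
    have h2 : Equiv.swap x x₀ (g a) = x₀ ↔ g a = x := by
      rw [Equiv.swap_apply_eq_iff, Equiv.swap_apply_right]
    simp [h2]
  have h1 : ∀ F : X → ℚ, ∑ g : A ↪ X, F (g a) = N x₀ * ∑ x, F x := by
    intro F
    calc ∑ g : A ↪ X, F (g a) = ∑ g : A ↪ X, ∑ x, (if g a = x then 1 else 0) * F x := by
          simp
      _ = ∑ x, N x * F x := by
          rw [Finset.sum_comm]
          simp only [N, Finset.sum_mul]
      _ = N x₀ * ∑ x, F x := by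
          rw [Finset.mul_sum]
          exact Finset.sum_congr rfl fun x _ => by rw [hN]
  have h2 := h1 fun _ => 1
  simp only [Finset.sum_const, Finset.card_univ, nsmul_eq_mul, mul_one] at h2
  have hX : (Fintype.card X : ℚ) ≠ 0 := by
    have : 0 < Fintype.card X := Fintype.card_pos_iff.2 ⟨x₀⟩
    positivity
  rw [h1, h2]
  field_simp

open Classical in
/-- A product in which at most one factor depends on its variable averages to the product of
the averages. -/
theorem sum_embedding_prod {A X : Type*} [Fintype A] [Fintype X] [Nonempty X] (s : Set A)
    (hs : s.Subsingleton) (Φ : A → X → ℚ) (hΦ : ∀ a ∉ s, ∀ x y, Φ a x = Φ a y) :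
    ∑ g : A ↪ X, ∏ a, Φ a (g a) =
      Fintype.card (A ↪ X) * ∏ a, ((∑ x, Φ a x) / Fintype.card X) := by
  have hX : (Fintype.card X : ℚ) ≠ 0 := by
    have : 0 < Fintype.card X := Fintype.card_pos_iff.2 inferInstance
    positivity
  have hconst : ∀ a ∉ s, ∀ x, Φ a x = (∑ x, Φ a x) / Fintype.card X := by
    intro a ha x
    rw [eq_div_iff hX, Finset.sum_congr rfl (fun y _ => hΦ a ha y x)]
    simp [mul_comm]
  rcases hs.eq_empty_or_singleton with rfl | ⟨a₀, rfl⟩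
  · have : ∀ g : A ↪ X, ∏ a, Φ a (g a) = ∏ a, ((∑ x, Φ a x) / Fintype.card X) := fun g =>
      Finset.prod_congr rfl fun a _ => hconst a (by simp) _
    simp only [this, Finset.sum_const, Finset.card_univ, nsmul_eq_mul]
  · have : ∀ g : A ↪ X, ∏ a, Φ a (g a) =
        Φ a₀ (g a₀) * ∏ a ∈ Finset.univ.erase a₀, ((∑ x, Φ a x) / Fintype.card X) := by
      intro g
      rw [← Finset.mul_prod_erase _ _ (Finset.mem_univ a₀)]
      congr 1
      exact Finset.prod_congr rfl fun a ha => hconst a (by simpa using ha) _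
    simp only [this]
    rw [← Finset.sum_mul, sum_embedding_apply, mul_assoc,
      Finset.mul_prod_erase Finset.univ (fun a => (∑ x, Φ a x) / (Fintype.card X : ℚ))
        (Finset.mem_univ a₀)]

/-- A choice, for each color `i`, of an injection from the non-roots of color `i` to the vertices
of a different color.  Such families encode the parent maps of colored digraphs (possibly with
cycles) in which every non-root has one parent and the coloring is injective on closed
out-neighborhoods. -/
abbrev ParentFamily {V ι K : Type*} (r : ι → V) (χ : V → K) : Type _ :=
  ∀ i : K, {v : {v // v ∉ Set.range r} // χ v = i} ↪ {x : V // χ x ≠ i}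

/-- The parent map of a family of injections. -/
def ParentFamily.parent {V ι K : Type*} {r : ι → V} {χ : V → K} (p : ParentFamily r χ)
    (v : {v // v ∉ Set.range r}) : V :=
  p (χ v) ⟨v, rfl⟩

open Classical in
/-- If the factors depending on the parent belong to vertices of distinct colors, then the average of
a product over the non-roots is the product of the averages. -/
theorem sum_parentFamily_prod {V ι K : Type*} [Fintype V] [Fintype K] {r : ι → V} {χ : V → K}
    (hne : ∀ i, Nonempty {x : V // χ x ≠ i}) (s : Set {v // v ∉ Set.range r})
    (hs : Set.InjOn (fun v : {v // v ∉ Set.range r} => χ v) s)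
    (Φ : {v // v ∉ Set.range r} → V → ℚ) (hΦ : ∀ v ∉ s, ∀ x y, Φ v x = Φ v y) :
    ∑ p : ParentFamily r χ, ∏ v, Φ v (p.parent v) =
      Fintype.card (ParentFamily r χ) *
        ∏ v : {v // v ∉ Set.range r},
          ((∑ x : {x : V // χ x ≠ χ v}, Φ v x) / Fintype.card {x : V // χ x ≠ χ v}) := by
  have h1 : ∀ p : ParentFamily r χ, ∏ v, Φ v (p.parent v) =
      ∏ i, ∏ v : {v : {v // v ∉ Set.range r} // χ v = i}, Φ v (p i v) := by
    intro p
    rw [← Fintype.prod_fiberwise (fun v : {v // v ∉ Set.range r} => χ v)]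
    refine Finset.prod_congr rfl fun i _ => Finset.prod_congr rfl ?_
    rintro ⟨v, rfl⟩ _
    rfl
  simp only [h1]
  rw [← Fintype.prod_sum (fun i (g : {v : {v // v ∉ Set.range r} // χ v = i} ↪ {x : V // χ x ≠ i})
    => ∏ v : {v : {v // v ∉ Set.range r} // χ v = i}, Φ v (g v))]
  rw [Fintype.card_pi, Nat.cast_prod,
    ← Fintype.prod_fiberwise (fun v : {v // v ∉ Set.range r} => χ v), ← Finset.prod_mul_distrib]
  refine Finset.prod_congr rfl fun i _ => ?_
  have := hne i
  have h2 := sum_embedding_prod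
    (A := {v : {v // v ∉ Set.range r} // χ v = i}) (X := {x : V // χ x ≠ i}) {v | v.1 ∈ s} (by
      rintro ⟨v, hv⟩ hvs ⟨w, hw⟩ hws
      exact Subtype.ext (hs hvs hws (hv.trans hw.symm))) (fun v x => Φ v.1 x.1)
    (fun v hv x y => hΦ v.1 hv _ _)
  refine h2.trans ?_
  congr 1
  refine Finset.prod_congr rfl ?_
  rintro ⟨v, rfl⟩ _
  rfl

open Classical in
/-- The entrywise average of `parentMatrix` over all families of injections. -/
noncomputable def meanMatrix {V ι K : Type*} [Fintype V] (r : ι → V) (χ : V → K) :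
    Matrix {v // v ∉ Set.range r} {v // v ∉ Set.range r} ℚ :=
  fun v w => if χ w ≠ χ v then (Fintype.card {x : V // χ x ≠ χ v} : ℚ)⁻¹ else 0

open Classical in
/-- The determinant `det (1 - A)` commutes with averaging over all families of injections, even
though rows of the same color are not independent: in the multilinear expansion the terms using
two rows of `A` of one color cancel by exchanging the two parents, and the remaining terms use
independent rows. -/
theorem sum_det_one_sub_parentMatrix {V ι K : Type*} [Fintype V] [Fintype K] {r : ι → V}
    {χ : V → K} (hne : ∀ i, Nonempty {x : V // χ x ≠ i}) :
    ∑ p : ParentFamily r χ, (1 - parentMatrix p.parent).det =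
      Fintype.card (ParentFamily r χ) * (1 - meanMatrix r χ).det := by
  let f := (Matrix.detRowAlternating (n := {v // v ∉ Set.range r}) (R := ℚ))
  let E : {v // v ∉ Set.range r} → {v // v ∉ Set.range r} → ℚ :=
    (1 : Matrix {v // v ∉ Set.range r} {v // v ∉ Set.range r} ℚ)
  have hexp : ∀ A : Matrix {v // v ∉ Set.range r} {v // v ∉ Set.range r} ℚ,
      (1 - A).det = ∑ s : Finset {v // v ∉ Set.range r}, f (s.piecewise E (fun v => -A v)) := by
    intro A
    have := f.toMultilinearMap.map_add_univ E (fun v => -A v)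
    refine Eq.trans ?_ this
    change _ = f _
    congr 1
    ext v w
    exact sub_eq_add_neg _ _
  simp only [hexp]
  rw [Finset.sum_comm, Finset.mul_sum]
  refine Finset.sum_congr rfl fun s _ => ?_
  -- `s` is the set of rows taken from the identity matrix; the other rows come from `-A`
  by_cases hs : Set.InjOn (fun v : {v // v ∉ Set.range r} => χ v) {v | v ∉ s}
  · have hdet : ∀ A : {v // v ∉ Set.range r} → {v // v ∉ Set.range r} → ℚ, f A =
        ∑ σ : Equiv.Perm {v // v ∉ Set.range r}, (σ.sign : ℚ) * ∏ v, A v (σ v) := by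
      intro A
      exact (Matrix.det_transpose (Matrix.of A)).symm.trans (Matrix.det_apply' _)
    simp only [hdet]
    rw [Finset.sum_comm, Finset.mul_sum]
    refine Finset.sum_congr rfl fun σ _ => ?_
    rw [← Finset.mul_sum]
    have h := sum_parentFamily_prod hne {v | v ∉ s} hs
      (fun v x => if v ∈ s then E v (σ v) else - if x = σ v then 1 else 0) (by
        intro v hv x y
        have : v ∈ s := by simpa using hv
        simp [this])
    have h1 : ∀ p : ParentFamily r χ,
        ∏ v, s.piecewise E (fun v => -parentMatrix p.parent v) v (σ v) =
        ∏ v, (if v ∈ s then E v (σ v) else - if p.parent v = σ v then 1 else 0) := by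
      intro p
      refine Finset.prod_congr rfl fun v _ => ?_
      by_cases hv : v ∈ s <;> simp [hv, parentMatrix]
    simp only [h1]
    rw [h, mul_left_comm]
    congr 2
    refine Finset.prod_congr rfl fun v _ => ?_
    have hX : (Fintype.card {x : V // χ x ≠ χ v} : ℚ) ≠ 0 := by
      have : 0 < Fintype.card {x : V // χ x ≠ χ v} := Fintype.card_pos_iff.2 (hne _)
      positivity
    by_cases hv : v ∈ s
    · simp only [hv, if_true, Finset.piecewise_eq_of_mem, Finset.sum_const, Finset.card_univ,
        nsmul_eq_mul]
      field_simp
    · simp only [hv, if_false, not_false_eq_true, Finset.piecewise_eq_of_notMem,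
        Finset.sum_neg_distrib, meanMatrix, Pi.neg_apply]
      by_cases hc : χ (σ v) ≠ χ v
      · have : ∑ x : {x : V // χ x ≠ χ v}, (if x.1 = (σ v).1 then (1 : ℚ) else 0) = 1 := by
          rw [Finset.sum_eq_single ⟨(σ v).1, hc⟩]
          · simp
          · intro b _ hb
            rw [if_neg fun h => hb (Subtype.ext h)]
          · simp
        rw [this, if_pos hc, neg_div, one_div]
      · have : ∑ x : {x : V // χ x ≠ χ v}, (if x.1 = (σ v).1 then (1 : ℚ) else 0) = 0 := by
          refine Finset.sum_eq_zero fun x _ => if_neg fun h => hc ?_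
          rw [← h]
          exact x.2
        rw [this, if_neg hc]
        simp
  · simp only [Set.InjOn, Set.mem_setOf_eq] at hs
    push Not at hs
    obtain ⟨v, hv, w, hw, hvw, hne'⟩ := hs
    have hr : f (s.piecewise E (fun v => -meanMatrix r χ v)) = 0 := by
      refine f.map_eq_zero_of_eq _ (i := v) (j := w) ?_ hne'
      ext u
      simp [hv, hw, meanMatrix, hvw]
    rw [hr, mul_zero]
    -- exchanging the parents of `v` and `w` exchanges two rows, so the sum equals its negative
    have hπ : ∀ i x, χ (Equiv.swap v w x).1 = i ↔ χ x.1 = i := by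
      intro i x
      by_cases hx : x = v
      · subst hx; simp [hvw]
      by_cases hx' : x = w
      · subst hx'; simp [hvw]
      rw [Equiv.swap_apply_of_ne_of_ne hx hx']
    let Θ : ParentFamily r χ ≃ ParentFamily r χ := Equiv.piCongrRight fun i =>
      Equiv.embeddingCongr ((Equiv.swap v w).subtypePerm (hπ i)).symm (Equiv.refl _)
    have hΘ : ∀ p x, (Θ p).parent x = p.parent (Equiv.swap v w x) := by
      intro p x
      have key : ∀ i (h : χ (Equiv.swap v w x).1 = i),
          (p i ⟨Equiv.swap v w x, h⟩ : V) = p.parent (Equiv.swap v w x) := by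
        rintro i rfl; rfl
      exact key (χ x) ((hπ _ _).2 rfl)
    have hneg : ∑ p : ParentFamily r χ, f (s.piecewise E (fun v => -parentMatrix p.parent v)) =
        - ∑ p : ParentFamily r χ, f (s.piecewise E (fun v => -parentMatrix p.parent v)) := by
      rw [← Finset.sum_neg_distrib]
      refine Fintype.sum_equiv Θ _ _ fun p => ?_
      rw [eq_neg_iff_add_eq_zero, add_comm]
      have := f.map_swap (s.piecewise E (fun v => -parentMatrix p.parent v)) hne'
      have h2 : s.piecewise E (fun v => -parentMatrix (Θ p).parent v) =
          s.piecewise E (fun v => -parentMatrix p.parent v) ∘ Equiv.swap v w := by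
        funext x
        by_cases hx : x = v
        · subst hx
          ext u
          simp [hv, hw, parentMatrix, hΘ]
        by_cases hx' : x = w
        · subst hx'
          ext u
          simp [hv, hw, parentMatrix, hΘ]
        ext u
        simp only [Function.comp, Equiv.swap_apply_of_ne_of_ne hx hx']
        by_cases hxs : x ∈ s <;>
          simp [hxs, parentMatrix, hΘ, Equiv.swap_apply_of_ne_of_ne hx hx']
      rw [h2, this]
      simp
    linarith

/-! ### Evaluation of the averaged determinant -/

open Classical in
/-- The averaged matrix factors through the colors, so its determinant reduces to that of a
rank-one perturbation of a diagonal matrix indexed by the colors. -/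
theorem det_one_sub_meanMatrix {V ι K : Type*} [Fintype V] [Fintype K] {r : ι → V}
    {χ : V → K} (N : ℚ) (x y : K → ℚ) (hx : ∀ i, x i < N) (hy : ∀ i, y i < N)
    (hout : ∀ i, (Nat.card {v : V // χ v ≠ i} : ℚ) = N - x i)
    (hin : ∀ i, (Nat.card {v : {v // v ∉ Set.range r} // χ v = i} : ℚ) = x i - y i) :
    (1 - meanMatrix r χ).det =
      (∏ i, (N - y i) - ∑ i, (x i - y i) * ∏ j ∈ Finset.univ.erase i, (N - y j)) /
        ∏ i, (N - x i) := by
  simp only [Nat.card_eq_fintype_card] at hout hin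
  let B : Matrix {v // v ∉ Set.range r} K ℚ := fun v i => if χ v = i then 1 else 0
  let C : Matrix K {v // v ∉ Set.range r} ℚ := fun i w => if χ w ≠ i then (N - x i)⁻¹ else 0
  have hBC : meanMatrix r χ = B * C := by
    ext v w
    rw [Matrix.mul_apply]
    simp only [B, C, meanMatrix, hout]
    rw [Finset.sum_eq_single (χ v)]
    · simp
    · intro i _ hi
      simp [Ne.symm hi]
    · simp
  have hx0 : ∀ i, N - x i ≠ 0 := fun i => (sub_pos.2 (hx i)).ne'
  have hy0 : ∀ i, N - y i ≠ 0 := fun i => (sub_pos.2 (hy i)).ne'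
  have hCB : 1 - C * B = Matrix.diagonal (fun i => (N - y i) / (N - x i)) *
      (1 + Matrix.replicateCol Unit (fun i => -(N - y i)⁻¹) *
        Matrix.replicateRow Unit (fun j => x j - y j)) := by
    ext i j
    have h1 : (C * B) i j = if i = j then 0 else (N - x i)⁻¹ * (x j - y j) := by
      rw [Matrix.mul_apply]
      simp only [B, C]
      split_ifs with hij
      · subst hij
        refine Finset.sum_eq_zero fun v _ => ?_
        by_cases h : χ v = i <;> simp [h]
      · rw [← hin j, Fintype.card_subtype, ← nsmul_eq_mul', ← Finset.sum_const,
          Finset.sum_filter]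
        refine Finset.sum_congr rfl fun v _ => ?_
        by_cases h : χ v = j
        · have : j ≠ i := fun h => hij h.symm
          simp [h, this]
        · simp [h]
    rw [Matrix.diagonal_mul, Matrix.sub_apply, h1, Matrix.add_apply, Matrix.mul_apply]
    have := hx0 i
    have := hy0 i
    by_cases hij : i = j
    · subst hij
      simp
      field_simp
      ring
    · simp [hij]
      field_simp
  rw [hBC, Matrix.det_one_sub_mul_comm, hCB, Matrix.det_mul, Matrix.det_diagonal,
    Matrix.det_one_add_replicateCol_mul_replicateRow, Finset.prod_div_distrib, div_mul_eq_mul_div]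
  congr 1
  rw [mul_add, mul_one, sub_eq_add_neg, dotProduct, Finset.mul_sum, ← Finset.sum_neg_distrib]
  congr 1
  refine Finset.sum_congr rfl fun i _ => ?_
  rw [← Finset.mul_prod_erase _ _ (Finset.mem_univ i)]
  have := hy0 i
  field_simp

/-- The polynomial `P_k` in closed form; its definition is the expansion in powers of `y`. -/
theorem Ppoly_eq (k : ℕ) (x y : Fin k → ℚ) :
    Ppoly k x y = ∏ i, (∑ j, x j - y i) -
      ∑ i, (x i - y i) * ∏ j ∈ Finset.univ.erase i, (∑ l, x l - y j) := by
  set N := ∑ j, x j with hN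
  let t : Finset (Fin k) → ℚ := fun S => (-1) ^ S.card * ∏ i ∈ S, y i
  have h1 : ∏ i, (N - y i) = ∑ S : Finset (Fin k), t S * N ^ (k - S.card) := by
    rw [Finset.prod_sub, Finset.powerset_univ]
    refine Finset.sum_congr rfl fun S _ => ?_
    rw [Finset.prod_const, Finset.card_univ_diff, Fintype.card_fin]
    ring
  have h2 : ∀ i, ∏ j ∈ Finset.univ.erase i, (N - y j) =
      ∑ S : Finset (Fin k), if i ∈ S then 0 else t S * N ^ (k - S.card - 1) := by
    intro i
    have hf : ∀ S : Finset (Fin k), (if i ∈ S then 0 else t S * N ^ (k - S.card - 1)) =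
        if i ∉ S then t S * N ^ (k - S.card - 1) else 0 := fun S => (ite_not _ _ _).symm
    simp only [hf]
    rw [Finset.prod_sub, ← Finset.sum_filter]
    refine Finset.sum_congr ?_ fun S hS => ?_
    · ext S
      simp [Finset.subset_erase]
    · have : S ⊆ Finset.univ.erase i := by
        simpa [Finset.subset_erase] using hS
      rw [Finset.prod_const, Finset.card_sdiff_of_subset this,
        Finset.card_erase_of_mem (Finset.mem_univ i), Finset.card_univ, Fintype.card_fin, Nat.sub_right_comm]
      ring
  -- `x i - y i = (N - y i) - (N - x i)`, and the first part completes the product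
  have h3 : ∑ i, (x i - y i) * ∏ j ∈ Finset.univ.erase i, (N - y j) =
      k * ∏ i, (N - y i) - ∑ i, (N - x i) * ∏ j ∈ Finset.univ.erase i, (N - y j) := by
    have : (k : ℚ) * ∏ i, (N - y i) = ∑ _i : Fin k, ∏ i, (N - y i) := by simp
    rw [this, ← Finset.sum_sub_distrib]
    refine Finset.sum_congr rfl fun i _ => ?_
    rw [← Finset.mul_prod_erase _ _ (Finset.mem_univ i)]
    ring
  have h4 : ∑ i, (N - x i) * ∏ j ∈ Finset.univ.erase i, (N - y j) =
      ∑ S : Finset (Fin k), t S * N ^ (k - S.card - 1) *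
        ∑ i, if i ∈ S then 0 else (N - x i) := by
    simp only [h2, Finset.mul_sum]
    rw [Finset.sum_comm]
    refine Finset.sum_congr rfl fun S _ => Finset.sum_congr rfl fun i _ => ?_
    split_ifs <;> ring
  rw [h3, h4, sub_sub_eq_add_sub, add_sub_right_comm, ← one_sub_mul, h1, Finset.mul_sum,
    ← Finset.sum_add_distrib, Ppoly]
  refine Finset.sum_congr rfl fun S _ => ?_
  split_ifs with hS
  · subst hS
    simp [t]
    ring
  · have hlt : S.card < k := by
      obtain ⟨i, hi⟩ := not_forall.1 (mt Finset.eq_univ_iff_forall.2 hS)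
      simpa using Finset.card_lt_univ_of_notMem hi
    have h5 : ∑ i, (if i ∈ S then 0 else (N - x i)) =
        (k - S.card) * N - (N - ∑ i, if i ∈ S then x i else 0) := by
      have : ∀ i, (if i ∈ S then 0 else (N - x i)) =
          N - (if i ∈ S then N else 0) - (x i - if i ∈ S then x i else 0) := by
        intro i; split_ifs <;> ring
      simp only [this, Finset.sum_sub_distrib, ← hN]
      simp
      ring
    have h6 : ∑ i, ((if i ∈ S then (1 : ℚ) else 0) - S.card) * x i =
        (∑ i, if i ∈ S then x i else 0) - S.card * N := by
      rw [hN, Finset.mul_sum, ← Finset.sum_sub_distrib]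
      refine Finset.sum_congr rfl fun i _ => ?_
      split_ifs <;> ring
    have h7 : N ^ (k - S.card) = N ^ (k - S.card - 1) * N := by
      rw [← pow_succ]
      congr 1
      omega
    rw [h5, h6, h7]
    simp only [t]
    ring

/-! ### Colored forests and parent families -/

theorem ParentFamily.apply_eq {V ι K : Type*} {r : ι → V} {χ : V → K} (p : ParentFamily r χ)
    {v : {v // v ∉ Set.range r}} {i : K} (h : χ v = i) : (p i ⟨v, h⟩ : V) = p.parent v := by
  subst h; rfl

theorem ParentFamily.color_parent_ne {V ι K : Type*} {r : ι → V} {χ : V → K}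
    (p : ParentFamily r χ) (v : {v // v ∉ Set.range r}) : χ (p.parent v) ≠ χ v :=
  (p (χ v) ⟨v, rfl⟩).2

theorem ParentFamily.parent_inj {V ι K : Type*} {r : ι → V} {χ : V → K}
    (p : ParentFamily r χ) {v w : {v // v ∉ Set.range r}} (h : χ v = χ w)
    (hp : p.parent v = p.parent w) : v = w := by
  rw [← p.apply_eq h, ← p.apply_eq rfl] at hp
  exact congrArg Subtype.val ((p (χ w)).injective (Subtype.ext hp))

theorem isForest_parentRel {V ι : Type*} {r : ι → V} (p : {v // v ∉ Set.range r} → V)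
    (h : WellFounded (parentRel p)) : IsForest (parentRel p) r where
  not_adj_root j _ hu := hu.1 ⟨j, rfl⟩
  parent w hw := ⟨p ⟨w, hw⟩, ⟨hw, rfl⟩, fun _ hu => hu.2.symm⟩
  wf := h

theorem CForest.isForest {k m n : ℕ} (F : CForest k m n) : IsForest F.adj F.root :=
  pathUnique_iff.1 F.path_unique

theorem CForest.ext_of {k m n : ℕ} {F G : CForest k m n} (h1 : F.adj = G.adj)
    (h2 : F.root = G.root) (h3 : F.color = G.color) : F = G := by
  cases F; cases G
  simp only at h1 h2 h3
  subst h1 h2 h3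
  rfl

/-- The forests with prescribed coloring and roots. -/
abbrev FixedForest {k m n : ℕ} (r : Fin m → Fin n) (χ : Fin n → Fin k) : Type :=
  {F : CForest k m n // F.color = χ ∧ F.root = r}

/-- The forest of an acyclic parent family. -/
def ParentFamily.toForest {k m n : ℕ} {r : Fin m → Fin n} {χ : Fin n → Fin k}
    (hr : Function.Injective r)
    (p : {p : ParentFamily r χ // WellFounded (parentRel p.parent)}) : FixedForest r χ :=
  ⟨{  adj := parentRel p.1.parent
      root := r
      color := χ
      root_inj := hr
      path_unique := pathUnique_iff.2 (isForest_parentRel _ p.2)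
      color_inj := by
        rintro v a ha b hb hab
        rcases ha with rfl | ⟨h1, h2⟩ <;> rcases hb with rfl | ⟨h3, h4⟩
        · rfl
        · rw [← h4] at hab
          exact absurd hab (p.1.color_parent_ne _)
        · rw [← h2] at hab
          exact absurd hab.symm (p.1.color_parent_ne _)
        · exact congrArg Subtype.val
            (p.1.parent_inj (v := ⟨a, h1⟩) (w := ⟨b, h3⟩) hab (h2.trans h4.symm)) }, rfl, rfl⟩

theorem ParentFamily.toForest_bijective {k m n : ℕ} {r : Fin m → Fin n} {χ : Fin n → Fin k}
    (hr : Function.Injective r) :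
    Function.Bijective (ParentFamily.toForest (χ := χ) hr) := by
  constructor
  · rintro ⟨p, hp⟩ ⟨q, hq⟩ h
    have h1 : parentRel p.parent = parentRel q.parent :=
      congrArg (fun F : FixedForest r χ => F.1.adj) h
    refine Subtype.ext ?_
    funext i
    ext ⟨v, hv⟩ : 2
    change (p i ⟨v, hv⟩ : Fin n) = q i ⟨v, hv⟩
    rw [p.apply_eq hv, q.apply_eq hv]
    have h2 : parentRel p.parent (p.parent v) v := ⟨v.2, rfl⟩
    rw [h1] at h2
    exact h2.2.symm
  · rintro ⟨F, rfl, rfl⟩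
    choose P hP hPu using F.isForest.parent
    let p : ParentFamily F.root F.color := fun i =>
      ⟨fun v => ⟨P v.1.1 v.1.2, by
        intro h
        have h1 := hP v.1.1 v.1.2
        have h2 := F.color_inj (P v.1.1 v.1.2) (Or.inl rfl) (Or.inr h1) (h.trans v.2.symm)
        exact F.isForest.wf.irrefl.irrefl v.1.1
          (Eq.subst (motive := fun x => F.adj x v.1.1) h2 h1)⟩, by
        rintro ⟨v, hv⟩ ⟨w, hw⟩ h
        have h : P v.1 v.2 = P w.1 w.2 := congrArg Subtype.val h
        have h1 := hP v.1 v.2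
        rw [h] at h1
        exact Subtype.ext (Subtype.ext (F.color_inj (P w.1 w.2) (Or.inr h1)
          (Or.inr (hP w.1 w.2)) (hv.trans hw.symm)))⟩
    have hadj : parentRel p.parent = F.adj := by
      funext u w
      refine propext ⟨?_, fun h => ?_⟩
      · rintro ⟨h, rfl⟩
        exact hP w h
      · have hw : w ∉ Set.range F.root := by
          rintro ⟨j, rfl⟩
          exact F.isForest.not_adj_root j u h
        exact ⟨hw, (hPu w hw u h).symm⟩
    refine ⟨⟨p, hadj ▸ F.isForest.wf⟩, ?_⟩
    exact Subtype.ext (CForest.ext_of hadj rfl rfl)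

/-! ### Relabelling -/

/-- Transport of a forest along a permutation of the vertices. -/
def CForest.map {k m n : ℕ} (F : CForest k m n) (e : Fin n ≃ Fin n) : CForest k m n where
  adj v w := F.adj (e.symm v) (e.symm w)
  root j := e (F.root j)
  color v := F.color (e.symm v)
  root_inj := e.injective.comp F.root_inj
  path_unique := by
    refine pathUnique_iff.2 ⟨?_, ?_, InvImage.wf _ F.isForest.wf⟩
    · intro j u h
      rw [e.symm_apply_apply] at h
      exact F.isForest.not_adj_root j _ h
    · intro w hw
      obtain ⟨u, hu, huu⟩ := F.isForest.parent (e.symm w) (by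
        rintro ⟨j, hj⟩
        exact hw ⟨j, by simp [hj]⟩)
      refine ⟨e u, by simpa using hu, fun u' hu' => ?_⟩
      rw [← huu _ hu', e.apply_symm_apply]
  color_inj := by
    intro v a ha b hb hab
    refine e.symm.injective (F.color_inj (e.symm v) ?_ ?_ hab)
    · exact ha.imp (fun h => congrArg e.symm h) id
    · exact hb.imp (fun h => congrArg e.symm h) id

theorem CForest.iso_map {k m n : ℕ} (F : CForest k m n) (e : Fin n ≃ Fin n) :
    F.Iso (F.map e) :=
  ⟨e, by simp [CForest.map], by simp [CForest.map], by simp [CForest.map]⟩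

theorem CForest.Iso.exists_map {k m n : ℕ} {F G : CForest k m n} (h : F.Iso G) :
    ∃ e : Fin n ≃ Fin n, F.map e = G := by
  obtain ⟨e, h1, h2, h3⟩ := h
  refine ⟨e, CForest.ext_of ?_ ?_ ?_⟩
  · funext v w
    simp [CForest.map, h1]
  · funext j
    exact h2 j
  · funext v
    simp [CForest.map, ← h3]

theorem CForest.iso_equivalence {k m n : ℕ} : Equivalence (CForest.Iso (k := k) (m := m) (n := n))
    where
  refl F := ⟨Equiv.refl _, by simp, by simp, by simp⟩
  symm := by
    rintro F G ⟨e, h1, h2, h3⟩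
    refine ⟨e.symm, fun v w => by simp [h1], fun j => by simp [← h2], fun v => by simp [← h3]⟩
  trans := by
    rintro F G H ⟨e, h1, h2, h3⟩ ⟨e', h1', h2', h3'⟩
    exact ⟨e.trans e', fun v w => by simp [h1, h1'], fun j => by simp [h2, h2'],
      fun v => by simp [h3, h3']⟩

/-- Colored forests are rigid: an automorphism fixes the roots, and then, descending, each
child of a fixed vertex, since the children have distinct colors. -/
theorem CForest.map_injective {k m n : ℕ} (F : CForest k m n) : Function.Injective F.map := by
  intro e₁ e₂ h
  have hadj : ∀ v w, F.adj (e₁.symm v) (e₁.symm w) ↔ F.adj (e₂.symm v) (e₂.symm w) :=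
    fun v w => iff_of_eq (congrFun (congrFun (congrArg CForest.adj h) v) w)
  have hroot : ∀ j, e₁ (F.root j) = e₂ (F.root j) := fun j => congrFun (congrArg CForest.root h) j
  have hcol : ∀ v, F.color (e₁.symm v) = F.color (e₂.symm v) :=
    fun v => congrFun (congrArg CForest.color h) v
  ext w : 1
  induction w using F.isForest.wf.induction with
  | _ w ih =>
  by_cases hw : w ∈ Set.range F.root
  · obtain ⟨j, rfl⟩ := hw
    exact hroot j
  · obtain ⟨u, hu, -⟩ := F.isForest.parent w hw
    have h1 := (hadj (e₁ u) (e₁ w)).1 (by simpa using hu)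
    rw [ih u hu, e₂.symm_apply_apply] at h1
    have h2 := hcol (e₁ w)
    rw [e₁.symm_apply_apply] at h2
    have h3 := F.color_inj u (Or.inr hu) (Or.inr h1) h2
    exact ((Equiv.symm_apply_eq e₂).1 h3.symm)

/-! ### Vertex labels -/

open Classical in
/-- A root is labelled by its index and a non-root by its color. -/
noncomputable def vertexLabel {V ι K : Type*} (r : ι → V) (χ : V → K) (v : V) : K ⊕ ι :=
  if h : v ∈ Set.range r then Sum.inr h.choose else Sum.inl (χ v)

theorem vertexLabel_eq_inr {V ι K : Type*} {r : ι → V} (hr : Function.Injective r) {χ : V → K}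
    {v : V} {j : ι} : vertexLabel r χ v = Sum.inr j ↔ r j = v := by
  unfold vertexLabel
  split_ifs with h
  · rw [Sum.inr.injEq]
    constructor
    · rintro rfl; exact h.choose_spec
    · rintro rfl; exact hr h.choose_spec
  · simp only [false_iff]
    rintro rfl
    exact h ⟨j, rfl⟩

theorem vertexLabel_eq_inl {V ι K : Type*} {r : ι → V} {χ : V → K}
    {v : V} {i : K} : vertexLabel r χ v = Sum.inl i ↔ v ∉ Set.range r ∧ χ v = i := by
  unfold vertexLabel
  split_ifs with h <;> simp [h]

/-- Preserving the labels is the same as preserving the coloring and the root order. -/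
theorem vertexLabel_comp_eq_iff {V ι K : Type*} {r r' : ι → V} (hr : Function.Injective r)
    (hr' : Function.Injective r') {χ χ' : V → K} (hc : ∀ j, χ (r j) = χ' (r' j)) (e : V ≃ V) :
    vertexLabel r' χ' ∘ e = vertexLabel r χ ↔
      (∀ v, χ' (e v) = χ v) ∧ ∀ j, e (r j) = r' j := by
  constructor
  · intro h
    have h1 : ∀ j, e (r j) = r' j := fun j => by
      have h2 := congrFun h (r j)
      rw [(vertexLabel_eq_inr hr).2 rfl] at h2
      exact ((vertexLabel_eq_inr hr').1 h2).symm
    refine ⟨fun v => ?_, h1⟩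
    by_cases hv : v ∈ Set.range r
    · obtain ⟨j, rfl⟩ := hv
      rw [h1, hc]
    · have h2 := congrFun h v
      rw [vertexLabel_eq_inl.2 ⟨hv, rfl⟩] at h2
      exact (vertexLabel_eq_inl.1 h2).2
  · rintro ⟨h1, h2⟩
    funext v
    by_cases hv : v ∈ Set.range r
    · obtain ⟨j, rfl⟩ := hv
      rw [(vertexLabel_eq_inr hr).2 rfl]
      exact (vertexLabel_eq_inr hr').2 (h2 j).symm
    · rw [vertexLabel_eq_inl.2 ⟨hv, rfl⟩]
      refine vertexLabel_eq_inl.2 ⟨?_, h1 v⟩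
      rintro ⟨j, hj⟩
      rw [← h2] at hj
      exact hv ⟨j, e.injective hj⟩

open Classical in
theorem card_nonroot_color {V : Type*} [Fintype V] {k m : ℕ} {r : Fin m → V}
    (hr : Function.Injective r) {χ : V → Fin k} {c : Fin m → Fin k} (hc : ∀ j, χ (r j) = c j)
    (i : Fin k) :
    Nat.card {v : {v // v ∉ Set.range r} // χ v = i} + rootColorCount c i =
      (Finset.univ.filter (fun v => χ v = i)).card := by
  have h1 : Nat.card {v : {v // v ∉ Set.range r} // χ v = i} =
      (Finset.univ.filter (fun v => χ v = i ∧ v ∉ Set.range r)).card := by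
    rw [← Fintype.card_subtype, ← Nat.card_eq_fintype_card]
    exact Nat.card_congr ((Equiv.subtypeSubtypeEquivSubtypeInter
      (fun v => v ∉ Set.range r) (fun v => χ v = i)).trans
        (Equiv.subtypeEquivRight fun v => and_comm))
  have h2 : rootColorCount c i =
      (Finset.univ.filter (fun v => χ v = i ∧ v ∈ Set.range r)).card := by
    rw [rootColorCount, ← Finset.card_map ⟨r, hr⟩]
    congr 1
    ext v
    simp only [Finset.mem_map, Finset.mem_filter, Finset.mem_univ, true_and, Set.mem_range,
      Function.Embedding.coeFn_mk]
    constructor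
    · rintro ⟨j, hj, rfl⟩
      exact ⟨(hc j).trans hj, j, rfl⟩
    · rintro ⟨hv, j, rfl⟩
      exact ⟨j, (hc j).symm.trans hv, rfl⟩
  rw [h1, h2, add_comm, ← Finset.filter_filter, ← Finset.filter_filter,
    Finset.card_filter_add_card_filter_not]

open Classical in
theorem card_vertexLabel_inl {V : Type*} [Fintype V] {k m : ℕ} {r : Fin m → V}
    (hr : Function.Injective r) {χ : V → Fin k} {c : Fin m → Fin k} (hc : ∀ j, χ (r j) = c j)
    (i : Fin k) :
    Nat.card {v // vertexLabel r χ v = Sum.inl i} =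
      (Finset.univ.filter (fun v => χ v = i)).card - rootColorCount c i := by
  rw [← card_nonroot_color hr hc i, Nat.add_sub_cancel]
  exact Nat.card_congr ((Equiv.subtypeEquivRight fun v => vertexLabel_eq_inl).trans
      (Equiv.subtypeSubtypeEquivSubtypeInter _ _).symm)

open Classical in
theorem card_vertexLabel_inr {V ι K : Type*} [Fintype V] {r : ι → V}
    (hr : Function.Injective r) {χ : V → K} (j : ι) :
    Nat.card {v // vertexLabel r χ v = Sum.inr j} = 1 := by
  rw [Nat.card_eq_fintype_card, Fintype.card_eq_one_iff]
  exact ⟨⟨r j, (vertexLabel_eq_inr hr).2 rfl⟩,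
    fun v => Subtype.ext ((vertexLabel_eq_inr hr).1 v.2).symm⟩

/-- Two labellings with the same label counts differ by a permutation. -/
theorem exists_equiv_comp_eq {V L : Type*} [Fintype V] (f g : V → L)
    (h : ∀ l, Nat.card {v // f v = l} = Nat.card {v // g v = l}) :
    ∃ e : V ≃ V, g ∘ e = f := by
  let E : ∀ l, {v // f v = l} ≃ {v // g v = l} := fun l => (Finite.card_eq.1 (h l)).some
  refine ⟨(Equiv.sigmaFiberEquiv f).symm.trans
    ((Equiv.sigmaCongrRight E).trans (Equiv.sigmaFiberEquiv g)), ?_⟩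
  funext v
  exact (E (f v) ⟨v, rfl⟩).2

/-! ### Counting isomorphism classes -/

/-- The `(λ,c)`-forests, as a subtype of the colored forests on `Fin |λ|`. -/
abbrev TypedForest {k m : ℕ} (lam : Fin k → ℕ) (c : Fin m → Fin k) : Type :=
  {F : CForest k m (∑ i, lam i) //
    (∀ i : Fin k, (Finset.univ.filter (fun v => F.color v = i)).card = lam i) ∧
    (∀ j : Fin m, F.color (F.root j) = c j)}

theorem quot_mk_eq_iff {k m : ℕ} {lam : Fin k → ℕ} {c : Fin m → Fin k}
    (F G : TypedForest lam c) :
    Quot.mk (fun F G : TypedForest lam c => F.1.Iso G.1) F = Quot.mk _ G ↔ F.1.Iso G.1 := by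
  have h : Equivalence (fun F G : TypedForest lam c => F.1.Iso G.1) :=
    CForest.iso_equivalence.comap Subtype.val
  exact h.quot_mk_eq_iff F G

/-- The relabellings preserving the coloring and the roots act freely on the forests with this
coloring and these roots, and the orbits are the isomorphism classes of `(λ,c)`-forests. -/
theorem forestCount_mul_prod_factorial {k m : ℕ} {lam : Fin k → ℕ} {c : Fin m → Fin k}
    {r : Fin m → Fin (∑ i, lam i)} (hr : Function.Injective r) {χ : Fin (∑ i, lam i) → Fin k}
    (hχ : ∀ i, (Finset.univ.filter (fun v => χ v = i)).card = lam i)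
    (hc : ∀ j, χ (r j) = c j) :
    forestCount k m lam c * ∏ i, (lam i - rootColorCount c i).factorial =
      Nat.card (FixedForest r χ) := by
  classical
  let Q := Quot (fun F G : TypedForest lam c => F.1.Iso G.1)
  let H := {e : Fin (∑ i, lam i) ≃ Fin (∑ i, lam i) // vertexLabel r χ ∘ e = vertexLabel r χ}
  have hH : Nat.card H = ∏ i, (lam i - rootColorCount c i).factorial := by
    rw [Nat.card_eq_fintype_card]
    refine (DomMulAct.stabilizer_card (vertexLabel r χ)).trans ?_
    rw [Fintype.prod_sum_type]
    have h1 : ∀ j : Fin m, Fintype.card {v // vertexLabel r χ v = Sum.inr j} = 1 :=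
      fun j => Nat.card_eq_fintype_card.symm.trans (card_vertexLabel_inr hr j)
    have h2 : ∀ i : Fin k, Fintype.card {v // vertexLabel r χ v = Sum.inl i} =
        lam i - rootColorCount c i := fun i => by
      rw [← Nat.card_eq_fintype_card, card_vertexLabel_inl hr hc, hχ]
    simp only [h1, h2, Nat.factorial_one, Finset.prod_const_one, mul_one]
  have hfix : ∀ F : FixedForest r χ, (∀ i : Fin k,
      (Finset.univ.filter (fun v => F.1.color v = i)).card = lam i) ∧
      (∀ j : Fin m, F.1.color (F.1.root j) = c j) := by
    rintro ⟨F, rfl, rfl⟩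
    exact ⟨hχ, hc⟩
  have hrep : ∀ q : Q, ∃ F : FixedForest r χ, (Quot.mk _ ⟨F.1, hfix F⟩ : Q) = q := by
    intro q
    induction q using Quot.ind with
    | _ F =>
    obtain ⟨F, hF1, hF2⟩ := F
    obtain ⟨e, he⟩ := exists_equiv_comp_eq (vertexLabel F.root F.color) (vertexLabel r χ) (by
      rintro (i | j)
      · rw [card_vertexLabel_inl hr hc, card_vertexLabel_inl F.root_inj hF2, hF1, hχ]
      · rw [card_vertexLabel_inr hr, card_vertexLabel_inr F.root_inj])
    obtain ⟨h1, h2⟩ := (vertexLabel_comp_eq_iff F.root_inj hr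
      (fun j => (hF2 j).trans (hc j).symm) e).1 he
    refine ⟨⟨F.map e, ?_, ?_⟩, ?_⟩
    · funext v
      simp [CForest.map, ← h1]
    · funext j
      simp [CForest.map, h2]
    · exact (quot_mk_eq_iff _ _).2 (CForest.iso_equivalence.symm (F.iso_map e))
  choose rep hrep using hrep
  let Ψ : Q × H → FixedForest r χ := fun x => ⟨(rep x.1).1.map x.2.1, by
    obtain ⟨h1, h2⟩ := (vertexLabel_comp_eq_iff hr hr (fun _ => rfl) x.2.1).1 x.2.2
    constructor
    · funext v
      simp [CForest.map, (rep x.1).2.1, ← h1 (x.2.1.symm v)]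
    · funext j
      simp [CForest.map, (rep x.1).2.2, h2]⟩
  have hΨ : Function.Bijective Ψ := by
    constructor
    · rintro ⟨q, h⟩ ⟨q', h'⟩ heq
      have heq : (rep q).1.map h.1 = (rep q').1.map h'.1 := congrArg Subtype.val heq
      have hqq : q = q' := by
        rw [← hrep q, ← hrep q']
        refine (quot_mk_eq_iff _ _).2 (CForest.iso_equivalence.trans
          ((rep q).1.iso_map h.1) ?_)
        rw [heq]
        exact CForest.iso_equivalence.symm ((rep q').1.iso_map h'.1)
      subst hqq
      exact Prod.ext rfl (Subtype.ext ((rep q).1.map_injective heq))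
    · intro F
      let q : Q := Quot.mk _ ⟨F.1, hfix F⟩
      obtain ⟨e, he⟩ := CForest.Iso.exists_map ((quot_mk_eq_iff _ _).1 (hrep q))
      have he : (rep q).1.map e = F.1 := he
      refine ⟨⟨q, e, (vertexLabel_comp_eq_iff hr hr (fun _ => rfl) e).2 ⟨fun v => ?_, fun j => ?_⟩⟩,
        Subtype.ext he⟩
      · have := congrFun (congrArg CForest.color he) (e v)
        simpa [CForest.map, (rep q).2.1, F.2.1] using this.symm
      · have := congrFun (congrArg CForest.root he) j
        simpa [CForest.map, (rep q).2.2, F.2.2] using this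
  rw [← hH, ← Nat.card_eq_of_bijective Ψ hΨ, Nat.card_prod]
  rfl

theorem sum_rootColorCount {k m : ℕ} (c : Fin m → Fin k) : ∑ i, rootColorCount c i = m := by
  have := Finset.card_eq_sum_card_fiberwise (f := c) (s := Finset.univ) (t := Finset.univ)
    (fun _ _ => Finset.mem_univ _)
  simpa [rootColorCount] using this.symm

/-- A coloring and a choice of roots with the prescribed color counts, built from `λ_i - i_c`
non-roots of each color `i` and one vertex for each root index. -/
theorem exists_root_color {k m : ℕ} {lam : Fin k → ℕ} {c : Fin m → Fin k}
    (h : ∀ i, rootColorCount c i ≤ lam i) :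
    ∃ (r : Fin m → Fin (∑ i, lam i)) (χ : Fin (∑ i, lam i) → Fin k), Function.Injective r ∧
      (∀ i, (Finset.univ.filter (fun v => χ v = i)).card = lam i) ∧ ∀ j, χ (r j) = c j := by
  classical
  let s : Fin k ⊕ Fin m → ℕ := Sum.elim (fun i => lam i - rootColorCount c i) (fun _ => 1)
  have hs : Fintype.card (Σ t, Fin (s t)) = ∑ i, lam i := by
    have h1 := sum_rootColorCount c
    have h2 : ∑ i, lam i = ∑ i, (lam i - rootColorCount c i) + ∑ i, rootColorCount c i := by
      rw [← Finset.sum_add_distrib]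
      exact Finset.sum_congr rfl fun i _ => (Nat.sub_add_cancel (h i)).symm
    simp [s, h2, h1]
  let E : Fin (∑ i, lam i) ≃ Σ t, Fin (s t) := (Fintype.equivFinOfCardEq hs).symm
  let r : Fin m → Fin (∑ i, lam i) := fun j => E.symm ⟨Sum.inr j, (0 : Fin 1)⟩
  let χ : Fin (∑ i, lam i) → Fin k := fun v => Sum.elim id c (E v).1
  refine ⟨r, χ, ?_, ?_, ?_⟩
  · intro j j' hj
    have := congrArg Sigma.fst (E.symm.injective hj)
    exact Sum.inr_injective this
  · intro i
    have h1 : (Finset.univ.filter (fun v => χ v = i)).card =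
        (Finset.univ.filter (fun x : Σ t, Fin (s t) => Sum.elim id c x.1 = i)).card := by
      rw [← Finset.card_map E.toEmbedding]
      congr 1
      ext x
      simp only [Finset.mem_map_equiv, Finset.mem_filter, Finset.mem_univ, true_and, χ,
        Equiv.apply_symm_apply]
    rw [h1, Finset.card_filter, Fintype.sum_sigma, Fintype.sum_sum_type]
    have h3 : ∑ j : Fin m, ∑ _x : Fin (s (Sum.inr j)), (if c j = i then 1 else 0) =
        rootColorCount c i := by
      rw [rootColorCount, Finset.card_filter]
      refine Finset.sum_congr rfl fun j _ => ?_
      have hone : (Finset.univ : Finset (Fin (s (Sum.inr j)))).card = 1 := Finset.card_fin _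
      rw [Finset.sum_const, hone, one_smul]
    have h4 : ∑ j : Fin k, ∑ _x : Fin (s (Sum.inl j)), (if j = i then 1 else 0) =
        lam i - rootColorCount c i := by
      rw [Finset.sum_eq_single i (fun j _ hj => by simp [hj]) (by simp)]
      simp only [if_true, Finset.sum_const, smul_eq_mul, mul_one]
      exact Finset.card_fin _
    exact (congrArg₂ (· + ·) h4 h3).trans (Nat.sub_add_cancel (h i))
  · intro j
    simp [χ, r]

theorem rootColorCount_le {k m : ℕ} {lam : Fin k → ℕ} {c : Fin m → Fin k}
    (F : TypedForest lam c) (i : Fin k) : rootColorCount c i ≤ lam i := by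
  rw [← F.2.1 i, ← card_nonroot_color F.1.root_inj F.2.2 i]
  exact Nat.le_add_left _ _

/-- Acyclic parent families, counted by summing `det (1 - A)`. -/
theorem card_fixedForest {k m n : ℕ} {r : Fin m → Fin n} (hr : Function.Injective r)
    {χ : Fin n → Fin k} (hne : ∀ i, Nonempty {x : Fin n // χ x ≠ i}) :
    (Nat.card (FixedForest r χ) : ℚ) =
      Nat.card (ParentFamily r χ) * (1 - meanMatrix r χ).det := by
  classical
  rw [← Nat.card_eq_of_bijective _ (ParentFamily.toForest_bijective (χ := χ) hr),
    Nat.card_eq_fintype_card, Nat.card_eq_fintype_card]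
  have h := sum_det_one_sub_parentMatrix (r := r) hne
  simp only [det_one_sub_parentMatrix] at h
  rw [Finset.sum_boole] at h
  rw [Fintype.card_subtype]
  convert h using 1 <;> congr!

/-- The count when no color is taken by all vertices. -/
theorem forestCount_of_lt {k m : ℕ} {lam : Fin k → ℕ} {c : Fin m → Fin k}
    (hlt : ∀ i : Fin k, lam i < ∑ j, lam j) :
    (forestCount k m lam c : ℚ) =
      Ppoly k (fun i => (lam i : ℚ)) (fun i => (rootColorCount c i : ℚ)) *
        ∏ i : Fin k,
          (1 / ((∑ j, (lam j : ℚ)) - (lam i : ℚ))) *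
            chooseZ ((∑ j, lam j) - lam i) ((lam i : ℤ) - (rootColorCount c i : ℤ)) := by
  classical
  by_cases hle : ∀ i, rootColorCount c i ≤ lam i
  swap
  · push Not at hle
    obtain ⟨i, hi⟩ := hle
    have : IsEmpty (TypedForest lam c) := ⟨fun F => (rootColorCount_le F i).not_gt hi⟩
    have h0 : forestCount k m lam c = 0 := by
      have : IsEmpty (Quot (fun F G : TypedForest lam c => F.1.Iso G.1)) :=
        ⟨fun q => by induction q using Quot.ind with | _ F => exact this.false F⟩
      exact Nat.card_of_isEmpty
    have h1 : chooseZ ((∑ j, lam j) - lam i) ((lam i : ℤ) - (rootColorCount c i : ℤ)) = 0 := by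
      rw [chooseZ, if_neg (by omega)]
    rw [h0, Finset.prod_eq_zero (Finset.mem_univ i) (by rw [h1, mul_zero])]
    simp
  · obtain ⟨r, χ, hr, hχ, hc⟩ := exists_root_color hle
    have hout : ∀ i, Nat.card {x : Fin (∑ j, lam j) // χ x ≠ i} = (∑ j, lam j) - lam i := by
      intro i
      rw [Nat.card_eq_fintype_card, Fintype.card_subtype_compl, Fintype.card_fin,
        Fintype.card_subtype, hχ]
    have hin : ∀ i, Nat.card {v : {v // v ∉ Set.range r} // χ v = i} =
        lam i - rootColorCount c i := by
      intro i
      rw [← hχ i, ← card_nonroot_color hr hc i, Nat.add_sub_cancel]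
    have hne : ∀ i, Nonempty {x : Fin (∑ j, lam j) // χ x ≠ i} := by
      intro i
      rw [← Fintype.card_pos_iff, ← Nat.card_eq_fintype_card, hout]
      exact Nat.sub_pos_of_lt (hlt i)
    have hcount := forestCount_mul_prod_factorial hr hχ hc
    have hN : ((∑ j, lam j : ℕ) : ℚ) = ∑ j, (lam j : ℚ) := by push_cast; rfl
    have hfix := card_fixedForest hr hne
    have hfam : Nat.card (ParentFamily r χ) =
        ∏ i, ((∑ j, lam j) - lam i).descFactorial (lam i - rootColorCount c i) := by
      rw [Nat.card_eq_fintype_card, Fintype.card_pi]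
      refine Finset.prod_congr rfl fun i _ => ?_
      rw [← hout, ← hin, Nat.card_eq_fintype_card, Nat.card_eq_fintype_card,
        Fintype.card_embedding_eq]
    have hdet₀ := det_one_sub_meanMatrix (r := r) (χ := χ) (∑ j, (lam j : ℚ))
      (fun i => (lam i : ℚ)) (fun i => (rootColorCount c i : ℚ))
      (fun i => by rw [← hN]; exact_mod_cast hlt i)
      (fun i => by rw [← hN]; exact_mod_cast (hle i).trans_lt (hlt i))
      (fun i => by
        rw [← hN, ← Nat.cast_sub (hlt i).le, ← hout i])
      (fun i => by
        rw [← Nat.cast_sub (hle i), ← hin i])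
    have hdet : (1 - meanMatrix r χ).det =
        Ppoly k (fun i => (lam i : ℚ)) (fun i => (rootColorCount c i : ℚ)) /
          ∏ i, ((∑ j, (lam j : ℚ)) - (lam i : ℚ)) := by
      rw [Ppoly_eq]
      convert hdet₀
    have hfac : (∏ i, ((lam i - rootColorCount c i).factorial : ℚ)) ≠ 0 :=
      Finset.prod_ne_zero_iff.2 fun i _ => by positivity
    refine mul_right_cancel₀ hfac ?_
    have hcount' : (forestCount k m lam c : ℚ) *
        ∏ i, ((lam i - rootColorCount c i).factorial : ℚ) = Nat.card (FixedForest r χ) := by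
      rw [← hcount]; push_cast; rfl
    rw [hcount', hfix, hdet, hfam, Nat.cast_prod, mul_assoc, ← Finset.prod_mul_distrib,
      mul_div_left_comm, ← Finset.prod_div_distrib]
    congr 1
    refine Finset.prod_congr rfl fun i _ => ?_
    have h1 : ((lam i : ℤ) - (rootColorCount c i : ℤ)) =
        ((lam i - rootColorCount c i : ℕ) : ℤ) := (Nat.cast_sub (hle i)).symm
    rw [h1, chooseZ, if_pos (Int.natCast_nonneg _), Int.toNat_natCast,
      Nat.descFactorial_eq_factorial_mul_choose]
    push_cast
    ring

/-- The count when all vertices have the same color: no arrow is possible. -/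
theorem forestCount_of_eq {k m : ℕ} {lam : Fin k → ℕ} {c : Fin m → Fin k} {i : Fin k}
    (hi : lam i = ∑ j, lam j) :
    forestCount k m lam c =
      if m = ∑ j, lam j ∧ m = rootColorCount c i then 1 else 0 := by
  classical
  have hcol : ∀ (F : TypedForest lam c) v, F.1.color v = i := by
    intro F v
    have h1 := F.2.1 i
    rw [hi] at h1
    have h2 : Finset.univ.filter (fun v => F.1.color v = i) = Finset.univ :=
      (Finset.card_eq_iff_eq_univ _).1 (by simpa using h1)
    simpa using h2.ge (Finset.mem_univ v)
  have hadj : ∀ (F : TypedForest lam c) u v, ¬ F.1.adj u v := by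
    intro F u v h
    have h1 := F.1.color_inj u (Or.inl rfl) (Or.inr h) ((hcol F u).trans (hcol F v).symm)
    subst h1
    exact F.1.isForest.wf.irrefl.irrefl _ h
  have hbij : ∀ F : TypedForest lam c, Function.Bijective F.1.root := by
    intro F
    refine ⟨F.1.root_inj, fun v => ?_⟩
    by_contra hv
    obtain ⟨u, hu, -⟩ := F.1.isForest.parent v hv
    exact hadj F u v hu
  split_ifs with h
  · obtain ⟨hm, hmi⟩ := h
    have hc : ∀ j, c j = i := by
      have h2 : Finset.univ.filter (fun j => c j = i) = Finset.univ :=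
        (Finset.card_eq_iff_eq_univ _).1 (by rw [Fintype.card_fin]; exact hmi.symm)
      intro j
      simpa using h2.ge (Finset.mem_univ j)
    let F₀ : TypedForest lam c := ⟨{
      adj := fun _ _ => False
      root := Fin.cast hm
      color := fun _ => i
      root_inj := Fin.cast_injective hm
      path_unique := pathUnique_iff.2
        ⟨fun _ _ h => h, fun w hw => absurd ⟨Fin.cast hm.symm w, rfl⟩ hw, ⟨fun _ => ⟨_, by simp⟩⟩⟩
      color_inj := by
        rintro v a (rfl | ha) b (rfl | hb) _
        · rfl
        · exact hb.elim
        · exact ha.elim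
        · exact ha.elim }, by
      refine ⟨fun j => ?_, fun j => (hc j).symm⟩
      by_cases hj : i = j
      · subst hj
        simp [hi]
      · have : lam j = 0 := by
          have h1 := Finset.add_sum_erase Finset.univ lam (Finset.mem_univ i)
          have h2 := Finset.single_le_sum (f := lam) (fun _ _ => Nat.zero_le _)
            (Finset.mem_erase.2 ⟨fun h => hj h.symm, Finset.mem_univ j⟩ :
              j ∈ Finset.univ.erase i)
          omega
        simp [hj, this]⟩
    refine Nat.card_eq_one_iff_unique.2 ⟨⟨fun q q' => ?_⟩, ⟨Quot.mk _ F₀⟩⟩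
    induction q using Quot.ind with
    | _ F =>
    induction q' using Quot.ind with
    | _ G =>
    refine Quot.sound ⟨(Equiv.ofBijective _ (hbij F)).symm.trans (Equiv.ofBijective _ (hbij G)),
      fun v w => iff_of_false (hadj F v w) (hadj G _ _), fun j => ?_, fun v => ?_⟩
    · have : (Equiv.ofBijective _ (hbij F)).symm (F.1.root j) = j :=
        (Equiv.symm_apply_eq _).2 rfl
      simp [this]
    · rw [hcol, hcol]
  · have hemp : IsEmpty (TypedForest lam c) := ⟨fun F => h (by
      have h1 := Fintype.card_of_bijective (hbij F)
      rw [Fintype.card_fin, Fintype.card_fin] at h1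
      refine ⟨h1, ?_⟩
      have : ∀ j, c j = i := fun j => by rw [← F.2.2 j, hcol]
      simp [rootColorCount, this])⟩
    have : IsEmpty (Quot (fun F G : TypedForest lam c => F.1.Iso G.1)) :=
      ⟨fun q => by induction q using Quot.ind with | _ F => exact hemp.false F⟩
    exact Nat.card_of_isEmpty


theorem statement0 (k m : ℕ) (hk : 1 ≤ k) (lam : Fin k → ℕ) (c : Fin m → Fin k) :
    (∀ i : Fin k, lam i = ∑ j, lam j →
      forestCount k m lam c =
        if m = ∑ j, lam j ∧ m = rootColorCount c i then 1 else 0) ∧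
    ((∀ i : Fin k, lam i < ∑ j, lam j) →
      (forestCount k m lam c : ℚ) =
        Ppoly k (fun i => (lam i : ℚ)) (fun i => (rootColorCount c i : ℚ)) *
          ∏ i : Fin k,
            (1 / ((∑ j, (lam j : ℚ)) - (lam i : ℚ))) *
              chooseZ ((∑ j, lam j) - lam i) ((lam i : ℤ) - (rootColorCount c i : ℤ))) := by
  exact ⟨fun _ hi => forestCount_of_eq hi, forestCount_of_lt⟩
end

section
/- Let k ∈ ℕ, λ ∈ (ℤ≥0)^k, c ∈ {1,…,k}, and n := |λ|. If λ_c = 0 then t_{λ,c} = 0. Otherwise (as an identity of rational numbers, noting n − λ_i ≥ 1 for all i ≠ c) t_{λ,c} = n^{k−2} · C(n−λ_c, λ_c−1) · Π_{i≠c} (1/(n−λ_i))·C(n−λ_i, λ_i). -/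
/- `t_{λ,c}`: the number of isomorphism classes of `(λ,c)`-trees. -/
noncomputable def treeCount (k : ℕ) (lam : Fin k → ℕ) (c : Fin k) : ℕ :=
  forestCount k 1 lam (fun _ => c)

namespace ColorTree

open Finset PowerSeries

/-! ### The signed Catalan series -/

/-- The power series `C` with zero constant term solving `C (1 + C) = X`; explicitly
`C = X * c(-X)` for the Catalan generating function `c`. -/
noncomputable def catC : ℚ⟦X⟧ :=
  X * rescale (-1) (catalanSeries.map (Nat.castRingHom ℚ))

/-- The power series `B = 1 + C`, the root of `B ^ 2 = B + X` with constant term `1`. -/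
noncomputable def catB : ℚ⟦X⟧ := 1 + catC

lemma catC_mul_catB : catC * catB = X := by
  have h := congrArg (fun f => rescale (-1 : ℚ) (f.map (Nat.castRingHom ℚ)))
    catalanSeries_sq_mul_X_add_one
  simp only [map_add, map_mul, map_pow, map_one, map_X, rescale_X] at h
  unfold catB catC
  set c := rescale (-1 : ℚ) (catalanSeries.map (Nat.castRingHom ℚ))
  have h' : (1 : ℚ⟦X⟧) = c + X * c ^ 2 := by
    simp only [map_neg, map_one] at h
    linear_combination h
  linear_combination (-X) * h'

lemma constantCoeff_catC : constantCoeff catC = 0 := by simp [catC]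

lemma constantCoeff_catB : constantCoeff catB = 1 := by simp [catB, constantCoeff_catC]

lemma catB_sq : catB ^ 2 = catB + X := by
  have := catC_mul_catB
  unfold catB at *
  linear_combination this

/-- The logarithmic derivative `X * B' / B`. -/
noncomputable def catV : ℚ⟦X⟧ := X * derivative ℚ catB * catB⁻¹

lemma catV_mul_catB : catV * catB = X * derivative ℚ catB := by
  unfold catV
  rw [mul_assoc, PowerSeries.inv_mul_cancel _ (by simp [constantCoeff_catB]), mul_one]

lemma coeff_X_mul_derivative (f : ℚ⟦X⟧) (a : ℕ) :
    coeff a (X * derivative ℚ f) = a * coeff a f := by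
  cases a with
  | zero => simp
  | succ a => rw [coeff_succ_X_mul, coeff_derivative]; push_cast; ring

lemma coeff_natCast_mul (n a : ℕ) (f : ℚ⟦X⟧) :
    coeff a ((n : ℚ⟦X⟧) * f) = n * coeff a f := by
  rw [← nsmul_eq_mul, map_nsmul, nsmul_eq_mul]

lemma coeff_catV_mul_pow (a n : ℕ) :
    (n : ℚ) * coeff a (catV * catB ^ n) = a * coeff a (catB ^ n) := by
  rw [← coeff_X_mul_derivative]
  cases n with
  | zero => simp
  | succ n =>
    rw [derivative_pow, Nat.add_sub_cancel]
    have : X * (((n + 1 : ℕ) : ℚ⟦X⟧) * catB ^ n * derivative ℚ catB)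
        = ((n + 1 : ℕ) : ℚ⟦X⟧) * (catV * catB ^ (n + 1)) := by
      linear_combination (-(((n + 1 : ℕ) : ℚ⟦X⟧)) * catB ^ n) * catV_mul_catB
    rw [this, coeff_natCast_mul]

/-- The factor of the root color in Lagrange's formula for a single root, with `a = λ_c`: up to the
factor `n * (n + 1)`, the left side is the part `a / n` of the main term that the other colors leave
over, minus the correction term of the root color itself. -/
lemma coeff_root (a n : ℕ) :
    ((n : ℚ) + 1) * (a * coeff a (catC * catB ^ n) - n * coeff a (catV * catC * catB ^ n))
      = a * coeff a (catB ^ (n + 1)) := by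
  have hd : derivative ℚ catC = derivative ℚ catB := by simp [catB]
  have h1 : X * derivative ℚ (catC * catB ^ n)
      = X * derivative ℚ catB * catB ^ n + (n : ℚ⟦X⟧) * (catV * catC * catB ^ n) := by
    rw [Derivation.leibniz, derivative_pow, smul_eq_mul, smul_eq_mul, hd]
    cases n with
    | zero => simp
    | succ n =>
      rw [Nat.add_sub_cancel]
      linear_combination (-(((n + 1 : ℕ) : ℚ⟦X⟧)) * catC * catB ^ n) * catV_mul_catB
  have h2 : X * derivative ℚ (catB ^ (n + 1))
      = ((n + 1 : ℕ) : ℚ⟦X⟧) * (X * derivative ℚ catB * catB ^ n) := by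
    rw [derivative_pow, Nat.add_sub_cancel]; ring
  have e1 := congrArg (coeff a) h1
  have e2 := congrArg (coeff a) h2
  rw [coeff_X_mul_derivative] at e1 e2
  rw [map_add, coeff_natCast_mul] at e1
  rw [coeff_natCast_mul] at e2
  push_cast at e2
  rw [e1, e2]
  ring

/-- Fibonacci polynomials, normalised to start at `1, 1`. -/
noncomputable def fibP : ℕ → ℚ⟦X⟧
  | 0 => 1
  | 1 => 1
  | (n + 2) => fibP (n + 1) + X * fibP n

lemma coeff_fibP (n a : ℕ) : coeff a (fibP n) = ((n - a).choose a : ℚ) := by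
  induction n using Nat.twoStepInduction generalizing a with
  | zero => cases a <;> simp [fibP, coeff_one]
  | one =>
    rcases a with _ | _ | a <;> simp [fibP, coeff_one]
  | more n ih1 ih2 =>
    rw [fibP, map_add, ih2]
    cases a with
    | zero => simp
    | succ a =>
      rw [coeff_succ_X_mul, ih1]
      rcases le_or_gt a n with h | h
      · have e1 : n + 2 - (a + 1) = (n - a) + 1 := by omega
        have e2 : n + 1 - (a + 1) = n - a := by omega
        rw [e1, e2, Nat.choose_succ_succ]
        push_cast; ring
      · have e1 : n + 2 - (a + 1) = 0 := by omega
        have e2 : n + 1 - (a + 1) = 0 := by omega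
        have e3 : n - a = 0 := by omega
        rw [e1, e2, e3]
        obtain ⟨b, rfl⟩ : ∃ b, a = b + 1 := ⟨a - 1, by omega⟩
        simp

/-- Binet's formula for the Lucas polynomials, whose characteristic roots are `B` and `-C`. -/
lemma lucas_binet (n : ℕ) :
    catB ^ (n + 2) + (-catC) ^ (n + 2) = fibP (n + 2) + X * fibP n := by
  have hB := catB_sq
  have hC : (-catC) ^ 2 = (-catC) + X := by
    have := catC_mul_catB
    unfold catB at this
    linear_combination this
  induction n using Nat.twoStepInduction with
  | zero => 
    simp only [zero_add, fibP]
    rw [hB, hC]; unfold catB; ring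
  | one =>
    simp only [fibP]
    have : catB = 1 + catC := rfl
    linear_combination (catB + 1) * hB + (-catC + 1) * hC + (1 + X) * this
  | more n ih1 ih2 =>
    have e : fibP (n + 2 + 2) + X * fibP (n + 2)
        = (fibP (n + 1 + 2) + X * fibP (n + 1)) + X * (fibP (n + 2) + X * fibP n) := by
      rw [fibP, fibP, fibP]; ring
    rw [e, ← ih1, ← ih2]
    linear_combination catB ^ (n + 2) * hB + (-catC) ^ (n + 2) * hC

/-- The coefficients of `B ^ r` in degrees below `r`, where they agree with those of the Lucas
polynomial. -/
lemma coeff_catB_pow {r a : ℕ} (h : a < r) :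
    ((r : ℚ) - a) * coeff a (catB ^ r) = r * ((r - a).choose a : ℚ) := by
  obtain rfl | ⟨n, rfl⟩ : r = 1 ∨ ∃ n, r = n + 2 := by
    rcases r with _ | _ | n
    · omega
    · simp
    · exact Or.inr ⟨n, rfl⟩
  · obtain rfl : a = 0 := by omega
    simp [constantCoeff_catB]
  · have hc : coeff a ((-catC) ^ (n + 2)) = 0 := by
      have : (X : ℚ⟦X⟧) ^ (n + 2) ∣ (-catC) ^ (n + 2) := by
        apply pow_dvd_pow_of_dvd
        rw [X_dvd_iff]; simp [constantCoeff_catC]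
      exact X_pow_dvd_iff.1 this a h
    have e := congrArg (coeff a) (lucas_binet n)
    rw [map_add, hc, add_zero, map_add, coeff_fibP] at e
    rw [e]
    cases a with
    | zero => simp
    | succ a =>
      rw [coeff_succ_X_mul, coeff_fibP]
      obtain ⟨m, rfl⟩ : ∃ m, n = m + a := ⟨n - a, by omega⟩
      have e1 : m + a + 2 - (a + 1) = m + 1 := by omega
      have e2 : m + a - a = m := by omega
      rw [e1, e2]
      have := Nat.add_one_mul_choose_eq m a
      have h3 : ((m : ℚ) + 1) * m.choose a = (m + 1).choose (a + 1) * (a + 1) := by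
        exact_mod_cast this
      push_cast
      linear_combination h3

/-! ### Lagrange's formula as a solution of the recurrence -/

variable {k : ℕ}

/-- The coefficient of `x ^ lam` in `∏ i, V i (x i) * C (x i) ^ mu i * B (x i) ^ n`. -/
noncomputable def wt (V : Fin k → ℚ⟦X⟧) (lam mu : Fin k → ℕ) (n : ℕ) : ℚ :=
  ∏ i, coeff (lam i) (V i * catC ^ mu i * catB ^ n)

lemma wt_step (V : Fin k → ℚ⟦X⟧) (lam mu : Fin k → ℕ) (n : ℕ) (c : Fin k) :
    wt V (lam + Pi.single c 1) (mu + Pi.single c 1) (n + 1)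
      = ∑ S ∈ (univ.erase c).powerset, wt V lam (fun i => mu i + if i ∈ S then 1 else 0) n := by
  unfold wt
  rw [← mul_prod_erase univ _ (mem_univ c)]
  have hc : coeff ((lam + Pi.single c 1 : Fin k → ℕ) c)
        (V c * catC ^ (mu + Pi.single c 1 : Fin k → ℕ) c * catB ^ (n + 1))
      = coeff (lam c) (V c * catC ^ mu c * catB ^ n) := by
    have : V c * catC ^ (mu c + 1) * catB ^ (n + 1) = X * (V c * catC ^ mu c * catB ^ n) := by
      rw [← catC_mul_catB]; ring
    simp [this, coeff_succ_X_mul]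
  have ho : ∀ i ∈ univ.erase c, coeff ((lam + Pi.single c 1 : Fin k → ℕ) i)
        (V i * catC ^ (mu + Pi.single c 1 : Fin k → ℕ) i * catB ^ (n + 1))
      = coeff (lam i) (V i * catC ^ (mu i + 1) * catB ^ n)
        + coeff (lam i) (V i * catC ^ mu i * catB ^ n) := by
    intro i hi
    have hi' : i ≠ c := (mem_erase.1 hi).1
    simp only [Pi.add_apply, Pi.single_eq_of_ne hi', add_zero]
    rw [← map_add]
    congr 1
    have : catB = 1 + catC := rfl
    rw [pow_succ catB, this]; ring
  rw [hc, prod_congr rfl ho, prod_add, mul_sum]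
  refine sum_congr rfl fun S hS => ?_
  rw [mem_powerset] at hS
  have hcS : c ∉ S := fun h => by simpa using hS h
  rw [← mul_prod_erase univ _ (mem_univ c), ← prod_sdiff hS]
  simp only [hcS, if_false, add_zero]
  congr 1
  rw [mul_comm]
  congr 1
  · refine prod_congr rfl fun i hi => ?_
    simp [(mem_sdiff.1 hi).2]
  · refine prod_congr rfl fun i hi => ?_
    simp [hi]

/-- Lagrange's formula for the number of forests with `lam i` vertices and `mu i` roots of
color `i`: the coefficient of `x ^ lam` in `H * φ ^ n * (1 - u φ' / φ)`, for
`φ = ∏ i, B (x i)`, `H = ∏ i, C (x i) ^ mu i`, `n = |lam|`, and `u φ' / φ = ∑ j, V (x j)`. -/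
noncomputable def cnt (lam mu : Fin k → ℕ) : ℚ :=
  wt (fun _ => 1) lam mu (∑ i, lam i) -
    ∑ j, wt (Function.update (fun _ => 1) j catV) lam mu (∑ i, lam i)

lemma cnt_step (lam mu : Fin k → ℕ) (c : Fin k) :
    cnt (lam + Pi.single c 1) (mu + Pi.single c 1)
      = ∑ S ∈ (univ.erase c).powerset, cnt lam (fun i => mu i + if i ∈ S then 1 else 0) := by
  unfold cnt
  have : ∑ i, (lam + Pi.single c 1 : Fin k → ℕ) i = ∑ i, lam i + 1 := by
    simp [sum_add_distrib]
  rw [this, wt_step, sum_congr rfl fun j _ => wt_step _ lam mu (∑ i, lam i) c,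
    sum_comm, ← sum_sub_distrib]

lemma wt_eq_zero (V : Fin k → ℚ⟦X⟧) (lam mu : Fin k → ℕ) (n : ℕ) (c : Fin k)
    (h : lam c = 0) (h' : mu c ≠ 0) : wt V lam mu n = 0 := by
  apply prod_eq_zero (mem_univ c)
  simp [h, constantCoeff_catC, h']

lemma cnt_eq_zero (lam mu : Fin k → ℕ) (c : Fin k)
    (h : lam c = 0) (h' : mu c ≠ 0) : cnt lam mu = 0 := by
  simp [cnt, wt_eq_zero _ lam mu _ c h h']

lemma wt_update (f : ℚ⟦X⟧) (lam mu : Fin k → ℕ) (n : ℕ) (j : Fin k) :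
    wt (Function.update (fun _ => 1) j f) lam mu n
      = coeff (lam j) (f * catC ^ mu j * catB ^ n)
        * ∏ i ∈ univ.erase j, coeff (lam i) (catC ^ mu i * catB ^ n) := by
  unfold wt
  rw [← mul_prod_erase univ _ (mem_univ j)]
  congr 1
  · simp
  · refine prod_congr rfl fun i hi => ?_
    simp [(mem_erase.1 hi).1]

lemma cnt_no_roots (lam : Fin k → ℕ) : cnt lam 0 = if lam = 0 then 1 else 0 := by
  split_ifs with h
  · subst h
    have : ∀ j : Fin k, wt (Function.update (fun _ => 1) j catV) 0 0 0 = 0 := by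
      intro j
      rw [wt_update]
      simp [catV]
    unfold cnt
    simp only [Pi.zero_apply, sum_const_zero, this]
    simp [wt]
  · have hn : (∑ i, (lam i : ℚ)) ≠ 0 := by
      intro h0
      apply h
      funext i
      have : ∑ i, lam i = 0 := by exact_mod_cast h0
      simpa using (sum_eq_zero_iff.1 this) i (mem_univ i)
    have key : ∀ j : Fin k, (∑ i, (lam i : ℚ)) *
        wt (Function.update (fun _ => 1) j catV) lam 0 (∑ i, lam i)
        = lam j * wt (fun _ => 1) lam 0 (∑ i, lam i) := by
      intro j
      rw [wt_update]
      unfold wt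
      rw [← mul_prod_erase univ _ (mem_univ j)]
      have := coeff_catV_mul_pow (lam j) (∑ i, lam i)
      push_cast at this
      simp only [Pi.zero_apply, pow_zero, mul_one, one_mul]
      rw [← mul_assoc, this, mul_assoc]
    unfold cnt
    have h2 := sum_congr rfl fun j (_ : j ∈ (univ : Finset (Fin k))) => key j
    rw [← mul_sum, ← sum_mul] at h2
    rw [mul_left_cancel₀ hn h2, sub_self]

/-- The case of one root. -/
lemma cnt_single (lam : Fin k → ℕ) (c : Fin k) (h : 1 ≤ lam c) :
    cnt lam (Pi.single c 1) =
        (∑ j, (lam j : ℚ)) ^ ((k : ℤ) - 2) *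
          (Nat.choose ((∑ j, lam j) - lam c) (lam c - 1) : ℚ) *
          ∏ i ∈ univ.erase c,
            (1 / ((∑ j, (lam j : ℚ)) - (lam i : ℚ))) *
              (Nat.choose ((∑ j, lam j) - lam i) (lam i) : ℚ) := by
  have hle : lam c ≤ ∑ j, lam j := single_le_sum (fun _ _ => Nat.zero_le _) (mem_univ c)
  have hlt : ∀ i ∈ univ.erase c, lam i < ∑ j, lam j := by
    intro i hi
    have : lam c + lam i ≤ ∑ j, lam j := by
      rw [← sum_pair (mem_erase.1 hi).1.symm]
      exact sum_le_sum_of_subset (subset_univ _)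
    omega
  have hsum : (∑ i ∈ univ.erase c, (lam i : ℚ)) = (∑ j, lam j : ℕ) - lam c := by
    rw [← add_sum_erase univ lam (mem_univ c)]; push_cast; ring
  rw [← Nat.cast_sum]
  unfold cnt
  generalize hn : ∑ j, lam j = n at *
  have hn0 : (n : ℚ) ≠ 0 := by
    have : 0 < n := by omega
    positivity
  have hP : ∀ f : ℚ⟦X⟧, ∀ i ∈ univ.erase c,
      coeff (lam i) (f * catC ^ (Pi.single c 1 : Fin k → ℕ) i * catB ^ n)
        = coeff (lam i) (f * catB ^ n) := by
    intro f i hi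
    simp [Pi.single_eq_of_ne (mem_erase.1 hi).1]
  -- `P` is the common product over the colors other than the root color.
  set P := ∏ i ∈ univ.erase c, coeff (lam i) (catB ^ n) with hPdef
  have e1 : wt (fun _ => 1) lam (Pi.single c 1) n = coeff (lam c) (catC * catB ^ n) * P := by
    unfold wt
    rw [← mul_prod_erase univ _ (mem_univ c), prod_congr rfl (hP 1)]
    simp [hPdef]
  have e2 : wt (Function.update (fun _ => 1) c catV) lam (Pi.single c 1) n
      = coeff (lam c) (catV * catC * catB ^ n) * P := by
    rw [wt_update]
    have := prod_congr rfl (hP 1)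
    simp only [one_mul] at this
    rw [this]; simp [hPdef]
  have e3 : ∀ j ∈ univ.erase c,
      wt (Function.update (fun _ => 1) j catV) lam (Pi.single c 1) n
      = lam j / n * (coeff (lam c) (catC * catB ^ n) * P) := by
    intro j hj
    rw [← e1, div_mul_eq_mul_div, eq_div_iff hn0, wt_update]
    unfold wt
    rw [← mul_prod_erase univ _ (mem_univ j), hP _ j hj, hP _ j hj]
    have := coeff_catV_mul_pow (lam j) n
    simp only [one_mul]
    linear_combination this * ∏ x ∈ univ.erase j,
      coeff (lam x) (catC ^ (Pi.single c 1 : Fin k → ℕ) x * catB ^ n)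
  rw [← add_sum_erase univ _ (mem_univ c), sum_congr rfl e3, e1, e2, ← sum_mul, ← sum_div, hsum]
  have hr := coeff_root (lam c) n
  have hb := coeff_catB_pow (r := n + 1) (a := lam c) (by omega)
  have hch : ((n : ℚ) + 1 - lam c) * (n - lam c).choose (lam c - 1)
      = lam c * (n + 1 - lam c).choose (lam c) := by
    obtain ⟨a, ha⟩ : ∃ a, lam c = a + 1 := ⟨lam c - 1, by omega⟩
    obtain ⟨m, hm⟩ : ∃ m, n = m + lam c := ⟨n - lam c, by omega⟩
    have := Nat.add_one_mul_choose_eq m a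
    have h3 : ((m : ℚ) + 1) * m.choose a = (m + 1).choose (a + 1) * (a + 1) := by
      exact_mod_cast this
    have e4 : n + 1 - lam c = m + 1 := by omega
    have e5 : n - lam c = m := by omega
    rw [e4, e5, hm, ha, Nat.add_sub_cancel]
    push_cast
    linear_combination h3
  have hroot : (lam c : ℚ) * coeff (lam c) (catC * catB ^ n)
      - n * coeff (lam c) (catV * catC * catB ^ n) = (n - lam c).choose (lam c - 1) := by
    have hp : ((n : ℚ) + 1 - lam c) ≠ 0 := by
      have : (lam c : ℚ) ≤ n := by exact_mod_cast hle
      linarith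
    have hq : (n : ℚ) + 1 ≠ 0 := by positivity
    push_cast at hb
    apply mul_left_cancel₀ hp
    apply mul_left_cancel₀ hq
    linear_combination ((n : ℚ) + 1 - lam c) * hr + lam c * hb - ((n : ℚ) + 1) * hch
  have hPe : P = (n : ℚ) ^ (k - 1) * ∏ i ∈ univ.erase c,
      (1 / ((n : ℚ) - (lam i : ℚ))) * (Nat.choose (n - lam i) (lam i) : ℚ) := by
    have hcard : (univ.erase c).card = k - 1 := by simp
    rw [hPdef, ← hcard, ← prod_const, ← prod_mul_distrib]
    refine prod_congr rfl fun i hi => ?_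
    have h1 := hlt i hi
    have h2 := coeff_catB_pow h1
    have h3 : (n : ℚ) - lam i ≠ 0 := by
      have : (lam i : ℚ) < n := by exact_mod_cast h1
      linarith
    field_simp
    linear_combination h2
  have hpow : (n : ℚ) ^ ((k : ℤ) - 2) = (n : ℚ) ^ (k - 1) / n := by
    obtain ⟨m, rfl⟩ : ∃ m, k = m + 1 := ⟨k - 1, by have := c.pos; omega⟩
    have : ((m + 1 : ℕ) : ℤ) - 2 = (m : ℤ) - 1 := by push_cast; ring
    rw [this, zpow_sub_one₀ hn0, Nat.add_sub_cancel, zpow_natCast]; rfl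
  rw [hpow, ← hroot]
  have : ∀ Q : ℚ, (n : ℚ) ^ (k - 1) / n * ((lam c : ℚ) * coeff (lam c) (catC * catB ^ n)
      - n * coeff (lam c) (catV * catC * catB ^ n)) * Q = ((lam c : ℚ) * coeff (lam c) (catC * catB ^ n)
      - n * coeff (lam c) (catV * catC * catB ^ n)) / n * ((n : ℚ) ^ (k - 1) * Q) := by
    intro Q; ring
  rw [this, ← hPe]
  field_simp
  ring

/-! ### Forests as sets of words -/

/-- Sets of words encoding forests. A vertex is encoded by the word of colors read along the path
from the vertex back to its root, so that the head of a word is the color of the vertex and its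
tail encodes the parent. The elements of `R` are the roots; they need not have length one. -/
def IsForest (R A : Finset (List (Fin k))) : Prop :=
  R ⊆ A ∧ ∀ v ∈ A, v ∉ R → ∃ i j u, v = i :: j :: u ∧ j :: u ∈ A ∧ i ≠ j

/-- The number of words of each color. -/
def colorCount (A : Finset (List (Fin k))) (i : Fin k) : ℕ :=
  (A.filter (fun v => v.head? = some i)).card

/-- Sets of nonempty words none of which is a descendant of another. -/
def IsRootSet (R : Finset (List (Fin k))) : Prop :=
  (∀ v ∈ R, v ≠ []) ∧ ∀ u ∈ R, ∀ v ∈ R, u <:+ v → u = v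

/-- The roots left when the root `w` is deleted and its children have the colors in `S`. -/
def newRoots (R : Finset (List (Fin k))) (w : List (Fin k)) (S : Finset (Fin k)) :
    Finset (List (Fin k)) :=
  R.erase w ∪ S.image (fun i => i :: w)

lemma mem_newRoots {R : Finset (List (Fin k))} {w : List (Fin k)} {S : Finset (Fin k)}
    {v : List (Fin k)} :
    v ∈ newRoots R w S ↔ (v ≠ w ∧ v ∈ R) ∨ ∃ i ∈ S, i :: w = v := by
  simp [newRoots]

lemma IsForest.exists_suffix {R A : Finset (List (Fin k))} (h : IsForest R A) :
    ∀ v ∈ A, ∃ r ∈ R, r <:+ v := by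
  intro v
  induction v with
  | nil =>
    intro hv
    by_contra hc
    push Not at hc
    obtain ⟨i, j, u, he, -⟩ := h.2 [] hv (fun hR => hc _ hR (List.suffix_refl _))
    simp at he
  | cons a v ih =>
    intro hv
    by_cases hR : a :: v ∈ R
    · exact ⟨_, hR, List.suffix_refl _⟩
    · obtain ⟨i, j, u, he, hu, -⟩ := h.2 _ hv hR
      obtain ⟨-, rfl⟩ := List.cons.inj he
      obtain ⟨r, hr, hs⟩ := ih hu
      exact ⟨r, hr, hs.trans (List.suffix_cons _ _)⟩

lemma cons_ne {α : Type*} (i : α) (w : List α) : i :: w ≠ w := fun h => by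
  simpa using congrArg List.length h

lemma not_cons_suffix {α : Type*} (i : α) (w : List α) : ¬ i :: w <:+ w := fun h => by
  simpa using h.length_le

lemma isRootSet_newRoots {R : Finset (List (Fin k))} (hR : IsRootSet R) {w : List (Fin k)}
    (hw : w ∈ R) (S : Finset (Fin k)) : IsRootSet (newRoots R w S) := by
  refine ⟨fun v hv => ?_, fun u hu v hv huv => ?_⟩
  · rcases mem_newRoots.1 hv with h | ⟨i, -, rfl⟩
    · exact hR.1 v h.2
    · simp
  · rcases mem_newRoots.1 hu with ⟨hu1, hu2⟩ | ⟨i, -, rfl⟩ <;>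
      rcases mem_newRoots.1 hv with ⟨hv1, hv2⟩ | ⟨j, -, rfl⟩
    · exact hR.2 u hu2 v hv2 huv
    · rcases List.suffix_cons_iff.1 huv with h | h
      · exact h
      · exact absurd (hR.2 u hu2 w hw h) hu1
    · exact absurd (hR.2 w hw v hv2 ((List.suffix_cons i w).trans huv)).symm hv1
    · rcases List.suffix_cons_iff.1 huv with h | h
      · exact h
      · exact absurd h (not_cons_suffix i w)

/-- Deleting a root of color `c`: its children become roots. -/
lemma IsForest.erase_root {R A : Finset (List (Fin k))} (h : IsForest R A)
    {c : Fin k} {w : List (Fin k)} :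
    IsForest (newRoots R (c :: w) ((univ.erase c).filter fun i => i :: c :: w ∈ A))
      (A.erase (c :: w)) := by
  refine ⟨fun v hv => ?_, fun v hv hvR => ?_⟩
  · rcases mem_newRoots.1 hv with ⟨h1, h2⟩ | ⟨i, hi, rfl⟩
    · exact mem_erase.2 ⟨h1, h.1 h2⟩
    · exact mem_erase.2 ⟨cons_ne _ _, (mem_filter.1 hi).2⟩
  · obtain ⟨hv1, hv2⟩ := mem_erase.1 hv
    rw [mem_newRoots] at hvR
    push Not at hvR
    obtain ⟨i, j, u, rfl, hu, hij⟩ := h.2 v hv2 (hvR.1 hv1)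
    refine ⟨i, j, u, rfl, mem_erase.2 ⟨fun he => ?_, hu⟩, hij⟩
    obtain ⟨rfl, rfl⟩ := List.cons.inj he
    exact hvR.2 i (by simp [hij, hv2]) rfl

lemma IsForest.notMem_of_newRoots {R A : Finset (List (Fin k))} (hR : IsRootSet R)
    {w : List (Fin k)} (hw : w ∈ R) {S : Finset (Fin k)} (h : IsForest (newRoots R w S) A) :
    w ∉ A := by
  intro hA
  obtain ⟨r, hr, hs⟩ := h.exists_suffix w hA
  rcases mem_newRoots.1 hr with ⟨h1, h2⟩ | ⟨i, -, rfl⟩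
  · exact h1 (hR.2 r h2 w hw hs)
  · exact not_cons_suffix i w hs

lemma IsForest.cons_mem_iff {R A : Finset (List (Fin k))} (hR : IsRootSet R)
    {w : List (Fin k)} (hw : w ∈ R) {S : Finset (Fin k)} (h : IsForest (newRoots R w S) A)
    (i : Fin k) : i :: w ∈ A ↔ i ∈ S := by
  constructor
  · intro hA
    obtain ⟨r, hr, hs⟩ := h.exists_suffix _ hA
    rcases mem_newRoots.1 hr with ⟨h1, h2⟩ | ⟨j, hj, rfl⟩
    · rcases List.suffix_cons_iff.1 hs with rfl | h3
      · exact absurd (hR.2 w hw _ h2 (List.suffix_cons _ _)).symm h1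
      · exact absurd (hR.2 r h2 w hw h3) h1
    · rcases List.suffix_cons_iff.1 hs with h3 | h3
      · rwa [← (List.cons.inj h3).1]
      · exact absurd h3 (not_cons_suffix _ _)
  · exact fun hi => h.1 (mem_newRoots.2 (Or.inr ⟨i, hi, rfl⟩))

/-- Adding a new root of color `c` below the roots with colors in `S`. -/
lemma IsForest.insert_root {R A : Finset (List (Fin k))} {c : Fin k} {w : List (Fin k)}
    (hw : c :: w ∈ R) {S : Finset (Fin k)} (hS : S ⊆ univ.erase c)
    (h : IsForest (newRoots R (c :: w) S) A) : IsForest R (insert (c :: w) A) := by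
  refine ⟨fun v hv => ?_, fun v hv hvR => ?_⟩
  · by_cases hvw : v = c :: w
    · exact hvw ▸ mem_insert_self _ _
    · exact mem_insert_of_mem (h.1 (mem_newRoots.2 (Or.inl ⟨hvw, hv⟩)))
  · have hvA : v ∈ A := (mem_insert.1 hv).resolve_left (fun he => hvR (he ▸ hw))
    by_cases hv' : v ∈ newRoots R (c :: w) S
    · obtain ⟨i, hi, rfl⟩ := (mem_newRoots.1 hv').resolve_left (fun h => hvR h.2)
      exact ⟨i, c, w, rfl, mem_insert_self _ _, (mem_erase.1 (hS hi)).1⟩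
    · obtain ⟨i, j, u, he, hu, hij⟩ := h.2 v hvA hv'
      exact ⟨i, j, u, he, mem_insert_of_mem hu, hij⟩

lemma colorCount_insert {A : Finset (List (Fin k))} {c : Fin k} {w : List (Fin k)}
    (h : c :: w ∉ A) : colorCount (insert (c :: w) A) = colorCount A + Pi.single c 1 := by
  funext i
  unfold colorCount
  rw [filter_insert]
  by_cases hi : i = c
  · subst hi
    simp [h]
  · simp [Ne.symm hi, hi]

lemma colorCount_newRoots {R : Finset (List (Fin k))} (hR : IsRootSet R) {w : List (Fin k)}
    (hw : w ∈ R) (S : Finset (Fin k)) :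
    colorCount (newRoots R w S)
      = fun i => colorCount (R.erase w) i + if i ∈ S then 1 else 0 := by
  funext i
  unfold colorCount newRoots
  rw [filter_union, card_union_of_disjoint]
  · congr 1
    have : (S.image (fun i => i :: w)).filter (fun v => v.head? = some i)
        = (if i ∈ S then {i} else ∅ : Finset (Fin k)).image (fun i => i :: w) := by
      ext v
      simp only [mem_filter, mem_image]
      constructor
      · rintro ⟨⟨j, hj, rfl⟩, h⟩
        simp only [List.head?_cons, Option.some.injEq] at h
        subst h
        exact ⟨j, by simp [hj], rfl⟩
      · rintro ⟨j, hj, rfl⟩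
        split_ifs at hj with h
        · rw [mem_singleton] at hj
          subst hj
          exact ⟨⟨j, h, rfl⟩, rfl⟩
        · simp at hj
    rw [this]
    split_ifs <;> simp
  · apply disjoint_filter_filter
    rw [disjoint_left]
    intro v hv hv'
    obtain ⟨j, -, rfl⟩ := mem_image.1 hv'
    exact cons_ne j w (hR.2 w hw _ (mem_erase.1 hv).2 (List.suffix_cons _ _)).symm

/-- Counting word forests with prescribed roots and color counts, by deleting roots one by one. -/
theorem card_forests (n : ℕ) : ∀ (lam : Fin k → ℕ) (R : Finset (List (Fin k))),
    ∑ i, lam i = n → IsRootSet R →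
    ∃ s : Finset (Finset (List (Fin k))), (∀ A, A ∈ s ↔ IsForest R A ∧ colorCount A = lam) ∧
      (s.card : ℚ) = cnt lam (colorCount R) := by
  induction n with
  | zero =>
    intro lam R hn hR
    have hlam : lam = 0 := by
      funext i
      simpa using (sum_eq_zero_iff.1 hn) i (mem_univ i)
    subst hlam
    rcases R.eq_empty_or_nonempty with rfl | ⟨w, hw⟩
    · refine ⟨{∅}, fun A => ?_, ?_⟩
      · rw [mem_singleton]
        constructor
        · rintro rfl
          exact ⟨⟨subset_rfl, by simp⟩, by funext i; simp [colorCount]⟩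
        · rintro ⟨h, -⟩
          rw [eq_empty_iff_forall_notMem]
          intro v hv
          obtain ⟨r, hr, -⟩ := h.exists_suffix v hv
          simp at hr
      · have : colorCount (∅ : Finset (List (Fin k))) = 0 := by funext i; simp [colorCount]
        rw [this, cnt_no_roots]; simp
    · obtain ⟨c, w, rfl⟩ := List.exists_cons_of_ne_nil (hR.1 w hw)
      have hpos : ∀ A : Finset (List (Fin k)), c :: w ∈ A → colorCount A c ≠ 0 := by
        intro A hA
        exact card_ne_zero_of_mem (mem_filter.2 ⟨hA, rfl⟩)
      refine ⟨∅, fun A => ?_, ?_⟩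
      · simp only [notMem_empty, false_iff]
        rintro ⟨h, h0⟩
        exact hpos A (h.1 hw) (by rw [h0]; rfl)
      · rw [cnt_eq_zero _ _ c rfl (hpos R hw)]; simp
  | succ n ih =>
    intro lam R hn hR
    rcases R.eq_empty_or_nonempty with rfl | ⟨w, hw⟩
    · have hlam : lam ≠ 0 := by rintro rfl; simp at hn
      have h0 : colorCount (∅ : Finset (List (Fin k))) = 0 := by funext i; simp [colorCount]
      refine ⟨∅, fun A => ?_, ?_⟩
      · simp only [notMem_empty, false_iff]
        rintro ⟨h, h1⟩
        have : A = ∅ := by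
          rw [eq_empty_iff_forall_notMem]
          intro v hv
          obtain ⟨r, hr, -⟩ := h.exists_suffix v hv
          simp at hr
        rw [this, h0] at h1
        exact hlam h1.symm
      · rw [h0, cnt_no_roots, if_neg hlam]; simp
    · obtain ⟨c, w, rfl⟩ := List.exists_cons_of_ne_nil (hR.1 w hw)
      have hpos : ∀ A : Finset (List (Fin k)), c :: w ∈ A → colorCount A c ≠ 0 := by
        intro A hA
        exact card_ne_zero_of_mem (mem_filter.2 ⟨hA, rfl⟩)
      by_cases hc : lam c = 0
      · refine ⟨∅, fun A => ?_, ?_⟩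
        · simp only [notMem_empty, false_iff]
          rintro ⟨h, h0⟩
          exact hpos A (h.1 hw) (by rw [h0]; exact hc)
        · rw [cnt_eq_zero _ _ c hc (hpos R hw)]; simp
      · obtain ⟨lam', rfl⟩ : ∃ lam' : Fin k → ℕ, lam = lam' + Pi.single c 1 := by
          refine ⟨lam - Pi.single c 1, ?_⟩
          funext i
          by_cases hi : i = c
          · subst hi; simp; omega
          · simp [Pi.single_eq_of_ne hi]
        have hn' : ∑ i, lam' i = n := by
          simpa [sum_add_distrib] using hn
        choose f hf hfc using fun S => ih lam' (newRoots R (c :: w) S) hn'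
          (isRootSet_newRoots hR hw S)
        have hnot : ∀ S, ∀ A ∈ f S, c :: w ∉ A := fun S A hA =>
          ((hf S A).1 hA).1.notMem_of_newRoots hR hw
        have hinj : ∀ S T, ∀ A ∈ f S, ∀ B ∈ f T,
            insert (c :: w) A = insert (c :: w) B → A = B := by
          intro S T A hA B hB he
          rw [← erase_insert (hnot S A hA), he, erase_insert (hnot T B hB)]
        refine ⟨(univ.erase c).powerset.biUnion fun S => (f S).image (insert (c :: w)),
          fun A => ?_, ?_⟩
        · simp only [mem_biUnion, mem_powerset, mem_image]
          constructor
          · rintro ⟨S, hS, A, hA, rfl⟩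
            obtain ⟨h1, h2⟩ := (hf S A).1 hA
            exact ⟨h1.insert_root hw hS, by rw [colorCount_insert (hnot S A hA), h2]⟩
          · rintro ⟨h1, h2⟩
            refine ⟨_, filter_subset _ _, A.erase (c :: w), (hf _ _).2 ⟨h1.erase_root, ?_⟩,
              insert_erase (h1.1 hw)⟩
            have := colorCount_insert (notMem_erase (c :: w) A)
            rw [insert_erase (h1.1 hw), h2] at this
            exact (add_right_cancel this).symm
        · rw [card_biUnion]
          · have hcR : colorCount R = colorCount (R.erase (c :: w)) + Pi.single c 1 := by
              rw [← colorCount_insert (notMem_erase _ _), insert_erase hw]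
            rw [hcR, cnt_step, Nat.cast_sum]
            refine sum_congr rfl fun S _ => ?_
            rw [card_image_of_injOn (fun A hA B hB he => hinj S S A hA B hB he), hfc,
              colorCount_newRoots hR hw]
          · intro S _ T _ hST
            rw [Function.onFun, disjoint_left]
            intro X hX hX'
            obtain ⟨A, hA, rfl⟩ := mem_image.1 hX
            obtain ⟨B, hB, he⟩ := mem_image.1 hX'
            obtain rfl := hinj T S B hB A hA he
            apply hST
            ext i
            rw [← ((hf S B).1 hA).1.cons_mem_iff hR hw, ((hf T B).1 hB).1.cons_mem_iff hR hw]

/-! ### Graph trees and their word sets -/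

/-- The defining property of the path from the root to `v`. -/
def IsPath {n : ℕ} (adj : Fin n → Fin n → Prop) (root : Fin 1 → Fin n) (v : Fin n)
    (p : List (Fin n)) : Prop :=
  List.IsChain adj p ∧ (∃ j : Fin 1, p.head? = some (root j)) ∧ p.getLast? = some v

section Graph

variable {n : ℕ} (F : CForest k 1 n)

/-- The path from the root to `v`. -/
noncomputable def path (v : Fin n) : List (Fin n) := (F.path_unique v).choose

lemma isPath_path (v : Fin n) : IsPath F.adj F.root v (path F v) :=
  (F.path_unique v).choose_spec.1

lemma eq_path {v : Fin n} {p : List (Fin n)} (h : IsPath F.adj F.root v p) : p = path F v :=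
  (F.path_unique v).choose_spec.2 p h

lemma path_root : path F (F.root 0) = [F.root 0] :=
  (eq_path F ⟨List.isChain_singleton _, ⟨0, rfl⟩, rfl⟩).symm

/-- A path extended by an arc out of its endpoint is a path. -/
lemma IsPath.concat {adj : Fin n → Fin n → Prop} {root : Fin 1 → Fin n} {u v : Fin n}
    {p : List (Fin n)} (h : IsPath adj root u p) (huv : adj u v) :
    IsPath adj root v (p ++ [v]) := by
  obtain ⟨h1, ⟨j, h2⟩, h3⟩ := h
  refine ⟨List.isChain_append.2 ⟨h1, List.isChain_singleton _, ?_⟩, ⟨j, ?_⟩, ?_⟩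
  · intro x hx y hy
    rw [h3] at hx
    simp only [Option.mem_def, Option.some.injEq, List.head?_cons] at hx hy
    subst hx hy
    exact huv
  · simp [List.head?_append, h2]
  · simp

/-- A path is trivial or arises by extending a path to a parent of its endpoint. -/
lemma IsPath.cases {adj : Fin n → Fin n → Prop} {root : Fin 1 → Fin n} {v : Fin n}
    {p : List (Fin n)} (h : IsPath adj root v p) :
    (v = root 0 ∧ p = [v]) ∨ ∃ u q, adj u v ∧ IsPath adj root u q ∧ p = q ++ [v] := by
  obtain ⟨h1, ⟨j, h2⟩, h3⟩ := h
  obtain rfl : j = 0 := Subsingleton.elim _ _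
  obtain ⟨q, rfl⟩ := List.getLast?_eq_some_iff.1 h3
  rcases List.eq_nil_or_concat q with rfl | ⟨q', u, rfl⟩
  · left
    simp at h2
    exact ⟨h2, rfl⟩
  · right
    rw [List.concat_eq_append] at *
    obtain ⟨h4, -, h5⟩ := List.isChain_append.1 h1
    refine ⟨u, q' ++ [u], h5 u (by simp) v (by simp), ⟨h4, ⟨0, ?_⟩, by simp⟩, rfl⟩
    rw [← h2]
    simp [List.head?_append]

lemma path_adj {u v : Fin n} (h : F.adj u v) : path F v = path F u ++ [v] :=
  (eq_path F ((isPath_path F u).concat h)).symm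

lemma exists_parent {v : Fin n} (h : v ≠ F.root 0) : ∃ u, F.adj u v := by
  rcases (isPath_path F v).cases with ⟨h1, -⟩ | ⟨u, -, h1, -⟩
  · exact absurd h1 h
  · exact ⟨u, h1⟩

/-- The word of colors along the path from `v` back to the root. -/
noncomputable def word (v : Fin n) : List (Fin k) := ((path F v).map F.color).reverse

lemma word_root : word F (F.root 0) = [F.color (F.root 0)] := by
  simp [word, path_root]

lemma word_adj {u v : Fin n} (h : F.adj u v) : word F v = F.color v :: word F u := by
  simp [word, path_adj F h]

lemma exists_word_eq (v : Fin n) : ∃ w, word F v = F.color v :: w := by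
  by_cases h : v = F.root 0
  · subst h
    exact ⟨[], word_root F⟩
  · obtain ⟨u, hu⟩ := exists_parent F h
    exact ⟨_, word_adj F hu⟩

lemma word_ne_nil (v : Fin n) : word F v ≠ [] := by
  obtain ⟨w, hw⟩ := exists_word_eq F v
  simp [hw]

lemma color_ne_of_adj {u v : Fin n} (h : F.adj u v) : F.color v ≠ F.color u := by
  intro hc
  have : v = u := F.color_inj u (Or.inr h) (Or.inl rfl) hc
  subst this
  exact cons_ne _ _ (word_adj F h).symm

lemma word_injective : Function.Injective (word F) := by
  suffices ∀ w, ∀ u v, word F u = w → word F v = w → u = v from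
    fun u v h => this _ u v rfl h.symm
  intro w
  induction w with
  | nil => exact fun u v hu => absurd hu (word_ne_nil F u)
  | cons a w ih =>
    intro u v hu hv
    by_cases h1 : u = F.root 0 <;> by_cases h2 : v = F.root 0
    · rw [h1, h2]
    · obtain ⟨y, hy⟩ := exists_parent F h2
      rw [h1, word_root] at hu
      rw [word_adj F hy, ← hu] at hv
      exact absurd (List.cons.inj hv).2 (word_ne_nil F y)
    · obtain ⟨y, hy⟩ := exists_parent F h1
      rw [h2, word_root] at hv
      rw [word_adj F hy, ← hv] at hu
      exact absurd (List.cons.inj hu).2 (word_ne_nil F y)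
    · obtain ⟨x, hx⟩ := exists_parent F h1
      obtain ⟨y, hy⟩ := exists_parent F h2
      rw [word_adj F hx] at hu
      rw [word_adj F hy] at hv
      obtain ⟨hu1, hu2⟩ := List.cons.inj hu
      obtain ⟨hv1, hv2⟩ := List.cons.inj hv
      obtain rfl := ih x y hu2 hv2
      exact F.color_inj x (Or.inr hx) (Or.inr hy) (hu1.trans hv1.symm)

lemma adj_iff_word (u v : Fin n) : F.adj u v ↔ word F v = F.color v :: word F u := by
  refine ⟨word_adj F, fun h => ?_⟩
  by_cases hv : v = F.root 0
  · subst hv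
    rw [word_root] at h
    exact absurd (List.cons.inj h).2.symm (word_ne_nil F u)
  · obtain ⟨y, hy⟩ := exists_parent F hv
    rw [word_adj F hy] at h
    rwa [word_injective F (List.cons.inj h).2.symm]

/-- The set of words of the vertices of a tree. -/
noncomputable def wordSet : Finset (List (Fin k)) := univ.image (word F)

lemma mem_wordSet {w : List (Fin k)} : w ∈ wordSet F ↔ ∃ v, word F v = w := by
  simp [wordSet]

lemma isForest_wordSet : IsForest {[F.color (F.root 0)]} (wordSet F) := by
  refine ⟨?_, fun w hw hwR => ?_⟩
  · rw [singleton_subset_iff, mem_wordSet]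
    exact ⟨_, word_root F⟩
  · obtain ⟨v, rfl⟩ := (mem_wordSet F).1 hw
    have hv : v ≠ F.root 0 := by
      rintro rfl
      exact hwR (by rw [word_root]; simp)
    obtain ⟨u, hu⟩ := exists_parent F hv
    obtain ⟨t, ht⟩ := exists_word_eq F u
    refine ⟨F.color v, F.color u, t, ?_, ?_, color_ne_of_adj F hu⟩
    · rw [word_adj F hu, ht]
    · rw [← ht]
      exact (mem_wordSet F).2 ⟨u, rfl⟩

lemma head?_word (v : Fin n) : (word F v).head? = some (F.color v) := by
  obtain ⟨w, hw⟩ := exists_word_eq F v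
  simp [hw]

lemma colorCount_wordSet (i : Fin k) :
    colorCount (wordSet F) i = (univ.filter fun v => F.color v = i).card := by
  unfold colorCount wordSet
  rw [filter_image, card_image_of_injective _ (word_injective F)]
  simp [head?_word]

/-- An isomorphism preserves the words of the vertices. -/
lemma word_of_iso {F G : CForest k 1 n} (e : Fin n ≃ Fin n)
    (h1 : ∀ v w : Fin n, F.adj v w ↔ G.adj (e v) (e w))
    (h2 : ∀ j, e (F.root j) = G.root j) (h3 : ∀ v, G.color (e v) = F.color v) (v : Fin n) :
    word G (e v) = word F v := by
  suffices ∀ w, ∀ v, word F v = w → word G (e v) = w from this _ v rfl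
  intro w
  induction w with
  | nil => exact fun v hv => absurd hv (word_ne_nil F v)
  | cons a w ih =>
    intro v hv
    by_cases h : v = F.root 0
    · subst h
      rw [← hv, h2, word_root, word_root, ← h2, h3]
    · obtain ⟨u, hu⟩ := exists_parent F h
      rw [word_adj F hu] at hv
      rw [word_adj G ((h1 u v).1 hu), ih u (List.cons.inj hv).2, h3, (List.cons.inj hv).1]

lemma wordSet_eq_of_iso {F G : CForest k 1 n} (h : F.Iso G) : wordSet F = wordSet G := by
  obtain ⟨e, h1, h2, h3⟩ := h
  ext w
  rw [mem_wordSet, mem_wordSet]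
  constructor
  · rintro ⟨v, rfl⟩
    exact ⟨e v, word_of_iso e h1 h2 h3 v⟩
  · rintro ⟨v, rfl⟩
    refine ⟨e.symm v, ?_⟩
    rw [← word_of_iso e h1 h2 h3, Equiv.apply_symm_apply]

lemma iso_of_wordSet_eq {F G : CForest k 1 n} (h : wordSet F = wordSet G) : F.Iso G := by
  have hex : ∀ v, ∃ w, word G w = word F v := fun v =>
    (mem_wordSet G).1 (h ▸ (mem_wordSet F).2 ⟨v, rfl⟩)
  choose f hf using hex
  have hinj : Function.Injective f := fun u v huv => by
    apply word_injective F
    rw [← hf, ← hf, huv]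
  have hcol : ∀ v, G.color (f v) = F.color v := fun v => by
    have := congrArg List.head? (hf v)
    rw [head?_word, head?_word] at this
    exact Option.some.inj this
  refine ⟨Equiv.ofBijective f (Finite.injective_iff_bijective.1 hinj), fun u v => ?_,
    fun j => ?_, hcol⟩
  · rw [adj_iff_word, adj_iff_word]
    simp [hf, hcol]
  · obtain rfl : j = 0 := Subsingleton.elim _ _
    -- a vertex of `G` whose word has length one has no parent, hence is the root
    by_contra hne
    obtain ⟨u, hu⟩ := exists_parent G hne
    have h1 := word_adj G hu
    rw [Equiv.ofBijective_apply, hf, word_root] at h1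
    exact word_ne_nil G u (List.cons.inj h1).2.symm

end Graph

/-- Every word tree is the word set of a graph tree. -/
lemma exists_wordSet_eq {n : ℕ} {c : Fin k} {A : Finset (List (Fin k))} (h : IsForest {[c]} A)
    (hcard : A.card = n) : ∃ F : CForest k 1 n, wordSet F = A ∧ F.color (F.root 0) = c := by
  let e := A.equivFinOfCardEq hcard
  let x : Fin n → List (Fin k) := fun v => (e.symm v).1
  have hx : Function.Injective x := Subtype.val_injective.comp e.symm.injective
  have hxA : ∀ v, x v ∈ A := fun v => (e.symm v).2
  have hsurj : ∀ w ∈ A, ∃ v, x v = w := fun w hw => ⟨e ⟨w, hw⟩, by simp [x]⟩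
  obtain ⟨r, hr⟩ := hsurj [c] (h.1 (mem_singleton_self _))
  have hne : ∀ v, x v ≠ [] := fun v hv => by
    by_cases hc : x v ∈ ({[c]} : Finset (List (Fin k)))
    · rw [mem_singleton, hv] at hc
      simp at hc
    · obtain ⟨i, j, u, he, -⟩ := h.2 _ (hxA v) hc
      rw [hv] at he
      simp at he
  have hroot : ∀ v, x v = [c] → v = r := fun v hv => hx (hv.trans hr.symm)
  have hpar : ∀ v, v ≠ r → ∃ i u, x v = i :: x u := by
    intro v hv
    obtain ⟨i, j, t, he, ht, -⟩ := h.2 _ (hxA v)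
      (fun hc => hv (hroot v (mem_singleton.1 hc)))
    obtain ⟨u, hu⟩ := hsurj _ ht
    exact ⟨i, u, by rw [he, hu]⟩
  let adj : Fin n → Fin n → Prop := fun u v => ∃ i, x v = i :: x u
  have hadjr : ∀ u, ¬ adj u r := by
    rintro u ⟨i, hi⟩
    rw [hr] at hi
    exact hne u (List.cons.inj hi).2.symm
  have hadj_unique : ∀ u u' v, adj u v → adj u' v → u = u' := by
    rintro u u' v ⟨i, hi⟩ ⟨j, hj⟩
    rw [hi] at hj
    exact hx (List.cons.inj hj).2
  let color : Fin n → Fin k := fun v => (x v).head (hne v)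
  have hcolor : ∀ u v, adj u v → x v = color v :: x u := by
    rintro u v ⟨i, hi⟩
    simp [color, hi]
  have hpath : ∀ w, ∀ v, x v = w → ∃! p, IsPath adj (fun _ => r) v p := by
    intro w
    induction w with
    | nil => exact fun v hv => absurd hv (hne v)
    | cons a w ih =>
      intro v hv
      by_cases hvr : v = r
      · subst hvr
        refine ⟨[v], ⟨List.isChain_singleton _, ⟨0, rfl⟩, rfl⟩, fun p hp => ?_⟩
        rcases hp.cases with ⟨-, h1⟩ | ⟨u, -, h1, -⟩
        · exact h1
        · exact absurd h1 (hadjr u)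
      · obtain ⟨i, u, hu⟩ := hpar v hvr
        obtain ⟨p, hp, hpu⟩ := ih u (by rw [hv] at hu; exact (List.cons.inj hu).2.symm)
        refine ⟨p ++ [v], hp.concat ⟨i, hu⟩, fun q hq => ?_⟩
        rcases hq.cases with ⟨h1, -⟩ | ⟨u', q', h1, h2, rfl⟩
        · exact absurd h1 hvr
        · obtain rfl := hadj_unique u u' v ⟨i, hu⟩ h1
          rw [hpu q' h2]
  have hcolor_ne : ∀ u v, adj u v → color v ≠ color u := by
    intro u v huv hc
    have hvr : v ≠ r := fun hv => hadjr u (hv ▸ huv)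
    obtain ⟨i, j, t, he, -, hij⟩ := h.2 _ (hxA v)
      (fun hc => hvr (hroot v (mem_singleton.1 hc)))
    have h1 := hcolor u v huv
    rw [he] at h1
    obtain ⟨h2, h3⟩ := List.cons.inj h1
    apply hij
    rw [h2, hc]
    simp [color, ← h3]
  let F : CForest k 1 n :=
    { adj := adj
      root := fun _ => r
      color := color
      root_inj := fun _ _ _ => Subsingleton.elim _ _
      path_unique := fun v => hpath _ v rfl
      color_inj := by
        rintro v a (rfl | ha) b (rfl | hb) hab
        · rfl
        · exact absurd hab.symm (hcolor_ne _ _ hb)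
        · exact absurd hab (hcolor_ne _ _ ha)
        · apply hx
          rw [hcolor v a ha, hcolor v b hb, hab] }
  have hcr : color r = c := by simp [color, hr]
  have hword : ∀ w, ∀ v, x v = w → word F v = w := by
    intro w
    induction w with
    | nil => exact fun v hv => absurd hv (hne v)
    | cons a w ih =>
      intro v hv
      by_cases hvr : v = r
      · rw [← hv, hvr, hr, show r = F.root 0 from rfl, word_root]
        simpa [F] using hcr
      · obtain ⟨i, u, hu⟩ := hpar v hvr
        have huv : F.adj u v := ⟨i, hu⟩
        have hv' := hcolor u v ⟨i, hu⟩
        rw [word_adj F huv, ih u (by rw [hv] at hu; exact (List.cons.inj hu).2.symm), ← hv, hv']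
        rw [hv] at hv'
        rw [← (List.cons.inj hv').2]
  refine ⟨F, ?_, hcr⟩
  ext w
  rw [mem_wordSet]
  constructor
  · rintro ⟨v, rfl⟩
    rw [hword _ v rfl]
    exact hxA v
  · intro hw
    obtain ⟨v, hv⟩ := hsurj w hw
    exact ⟨v, hword w v hv⟩

lemma card_eq_sum_colorCount {c : Fin k} {A : Finset (List (Fin k))} (h : IsForest {[c]} A) :
    A.card = ∑ i, colorCount A i := by
  rw [card_eq_sum_card_fiberwise (f := fun v => v.head?.getD c) (t := univ)
    (fun _ _ => mem_coe.2 (mem_univ _))]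
  refine sum_congr rfl fun i _ => ?_
  unfold colorCount
  congr 1
  refine filter_congr fun v hv => ?_
  cases v with
  | nil =>
    obtain ⟨r, hr, hs⟩ := h.exists_suffix [] hv
    rw [List.suffix_nil.1 hs] at hr
    simp at hr
  | cons a v => simp

/-- Isomorphism classes of trees are counted by their word sets. -/
theorem treeCount_eq (lam : Fin k → ℕ) (c : Fin k) :
    (treeCount k lam c : ℚ) = cnt lam (Pi.single c 1) := by
  have hR : IsRootSet ({[c]} : Finset (List (Fin k))) := by
    constructor
    · simp
    · intro u hu v hv _
      rw [mem_singleton.1 hu, mem_singleton.1 hv]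
  obtain ⟨s, hs, hcard⟩ := card_forests _ lam {[c]} rfl hR
  have hcc : colorCount ({[c]} : Finset (List (Fin k))) = Pi.single c 1 := by
    funext i
    unfold colorCount
    by_cases hi : i = c
    · subst hi; simp [filter_singleton]
    · simp [filter_singleton, hi, Ne.symm hi]
  rw [← hcc, ← hcard]
  norm_cast
  unfold treeCount forestCount
  have hmem : ∀ F : {F : CForest k 1 (∑ i, lam i) //
      (∀ i : Fin k, (Finset.univ.filter (fun v => F.color v = i)).card = lam i) ∧
      (∀ j : Fin 1, F.color (F.root j) = c)}, wordSet F.1 ∈ s := by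
    intro F
    rw [hs]
    refine ⟨?_, ?_⟩
    · have := isForest_wordSet F.1
      rwa [F.2.2 0] at this
    · funext i
      rw [colorCount_wordSet, F.2.1 i]
  rw [← Fintype.card_coe s, ← Nat.card_eq_fintype_card]
  refine Nat.card_congr (Equiv.ofBijective (Quot.lift (fun F => (⟨wordSet F.1, hmem F⟩ : s))
    fun F G hFG => Subtype.ext (wordSet_eq_of_iso hFG)) ⟨?_, ?_⟩)
  · rintro ⟨F⟩ ⟨G⟩ h
    exact Quot.sound (iso_of_wordSet_eq (congrArg Subtype.val h))
  · rintro ⟨A, hA⟩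
    obtain ⟨h1, h2⟩ := (hs A).1 hA
    obtain ⟨F, hF, hc⟩ := exists_wordSet_eq h1
      (n := ∑ i, lam i) (by rw [card_eq_sum_colorCount h1, h2])
    refine ⟨Quot.mk _ ⟨F, fun i => ?_, fun j => ?_⟩, Subtype.ext hF⟩
    · rw [← colorCount_wordSet, hF, h2]
    · rw [Subsingleton.elim j 0, hc]

end ColorTree

theorem statement1 (k : ℕ) (hk : 1 ≤ k) (lam : Fin k → ℕ) (c : Fin k) :
    (lam c = 0 → treeCount k lam c = 0) ∧
    (1 ≤ lam c →
      (treeCount k lam c : ℚ) =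
        (∑ j, (lam j : ℚ)) ^ ((k : ℤ) - 2) *
          (Nat.choose ((∑ j, lam j) - lam c) (lam c - 1) : ℚ) *
          ∏ i ∈ Finset.univ.erase c,
            (1 / ((∑ j, (lam j : ℚ)) - (lam i : ℚ))) *
              (Nat.choose ((∑ j, lam j) - lam i) (lam i) : ℚ)) := by
  refine ⟨fun h => ?_, fun h => ?_⟩
  · have h1 := ColorTree.treeCount_eq lam c
    rw [ColorTree.cnt_eq_zero lam _ c h (by simp)] at h1
    exact_mod_cast h1
  · rw [ColorTree.treeCount_eq, ColorTree.cnt_single lam c h]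
end

section
/- For all n, k, m ≥ 1 and every root color sequence c̲ ∈ {1,…,k}^m, the total number of injectively k-colored m-rooted forests with n vertices and root colors c̲ satisfies f_{n,c̲} := Σ_{λ ∈ (ℤ≥0)^k, |λ| = n} f_{λ,c̲} = (m/n)·C(kn−n, n−m); in particular, when k ≥ 2 and n ≥ m this equals the Fuss–Catalan number A_{n−m}(k−1, (k−1)m). -/
/- Fuss–Catalan number `A_n(p,r) = (r/(np+r))·C(np+r,n)`. -/
def fussCat (n p r : ℕ) : ℚ := ((r : ℚ) / ((n * p + r : ℕ) : ℚ)) * ((n * p + r).choose n : ℚ)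

/-! ### The coefficients of `T ^ m` when `T = X (1 + T) ^ p` -/

/-- The binomial `C(N, n - m)`, read as `0` when `n < m`. -/
def chooseSub (N n m : ℕ) : ℕ := if m ≤ n then N.choose (n - m) else 0

/-- Vandermonde's identity weighted by the index of the first factor. -/
lemma weighted_vandermonde (p N r : ℕ) :
    (p + N) * ∑ x ∈ Finset.HasAntidiagonal.antidiagonal r, x.1 * (p.choose x.1 * N.choose x.2)
      = p * (r * (p + N).choose r) := by
  rcases r with _ | r
  · simp
  rcases p with _ | p
  · rw [Finset.Nat.sum_antidiagonal_succ]
    simp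
  · rw [Finset.Nat.sum_antidiagonal_succ]
    have h : ∀ x ∈ Finset.HasAntidiagonal.antidiagonal r,
        (x.1 + 1) * ((p + 1).choose (x.1 + 1) * N.choose x.2)
          = (p + 1) * (p.choose x.1 * N.choose x.2) := by
      intro x _
      have := Nat.add_one_mul_choose_eq p x.1
      linear_combination (N.choose x.2) * this.symm
    simp only [zero_mul, zero_add]
    rw [Finset.sum_congr rfl h, ← Finset.mul_sum, ← Nat.add_choose_eq]
    have := Nat.add_one_mul_choose_eq (p + N) r
    rw [show p + 1 + N = p + N + 1 by ring]
    linear_combination (p + 1) * this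

/-- The sum over the numbers `i` of children of the first root that occurs in the recursion
for the coefficients of `T ^ m`. -/
lemma sum_choose_mul_chooseSub (p N n m : ℕ) (hN : N = p * n) :
    (n + 1) * ∑ i ∈ Finset.range (p + 1), p.choose i * ((m + i) * chooseSub N n (m + i))
      = n * ((m + 1) * chooseSub (p * (n + 1)) (n + 1) (m + 1)) := by
  by_cases hmn : m ≤ n
  · obtain ⟨r, rfl⟩ := Nat.exists_eq_add_of_le hmn
    have e1 : ∑ i ∈ Finset.range (p + 1), p.choose i * ((m + i) * chooseSub N (m + r) (m + i))
        = ∑ i ∈ Finset.range (r + 1), p.choose i * ((m + i) * N.choose (r - i)) := by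
      have hl : ∑ i ∈ Finset.range (p + 1), p.choose i * ((m + i) * chooseSub N (m + r) (m + i))
          = ∑ i ∈ Finset.range (p + r + 1),
              p.choose i * ((m + i) * chooseSub N (m + r) (m + i)) := by
        apply Finset.sum_subset
        · intro i; simp only [Finset.mem_range]; omega
        · intro i _ hi
          rw [Nat.choose_eq_zero_of_lt (by simpa using hi), zero_mul]
      rw [hl]
      symm
      have : ∀ i ∈ Finset.range (r + 1), p.choose i * ((m + i) * N.choose (r - i))
          = p.choose i * ((m + i) * chooseSub N (m + r) (m + i)) := by
        intro i hi
        rw [Finset.mem_range] at hi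
        rw [chooseSub, if_pos (by omega), show m + r - (m + i) = r - i by omega]
      rw [Finset.sum_congr rfl this]
      apply Finset.sum_subset
      · intro i; simp only [Finset.mem_range]; omega
      · intro i _ hi
        rw [Finset.mem_range] at hi
        rw [chooseSub, if_neg (by omega)]; simp
    have e2 : ∑ i ∈ Finset.range (r + 1), p.choose i * ((m + i) * N.choose (r - i))
        = m * (p + N).choose r
          + ∑ x ∈ Finset.HasAntidiagonal.antidiagonal r, x.1 * (p.choose x.1 * N.choose x.2) := by
      rw [Nat.add_choose_eq, Finset.mul_sum, ← Finset.sum_add_distrib,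
        ← Finset.Nat.sum_antidiagonal_eq_sum_range_succ
          (fun i j => p.choose i * ((m + i) * N.choose j))]
      exact Finset.sum_congr rfl fun x _ => by ring
    rw [e1, e2]
    have hv := weighted_vandermonde p N r
    have hc : chooseSub (p * (m + r + 1)) (m + r + 1) (m + 1) = (p + N).choose r := by
      rw [chooseSub, if_pos (by omega), hN]
      congr 1
      · ring
      · omega
    rw [hc]
    set S := ∑ x ∈ Finset.HasAntidiagonal.antidiagonal r, x.1 * (p.choose x.1 * N.choose x.2) with hS
    have hS' : (m + r + 1) * S = r * (p + N).choose r := by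
      rcases Nat.eq_zero_or_pos p with hp | hp
      · subst hp
        have hN0 : N = 0 := by simpa using hN
        subst hN0
        rcases r with _ | r
        · simp [hS]
        · rw [hS, Finset.Nat.sum_antidiagonal_succ]
          simp
      · apply Nat.eq_of_mul_eq_mul_left hp
        rw [← hv, hN]; ring
    linear_combination hS'
  · rw [chooseSub, if_neg (by omega)]
    rw [Finset.sum_eq_zero]
    · simp
    · intro i _
      rw [chooseSub, if_neg (by omega)]; simp

open PowerSeries in
/-- Lagrange inversion for `T = X (1 + T) ^ p`, obtained from the recursion
`T ^ (m + 1) = ∑ i, C(p, i) X T ^ (m + i)`. -/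
lemma coeff_pow_of_functional_eq (p : ℕ) (T : PowerSeries ℕ) (hT : T = X * (1 + T) ^ p)
    (n : ℕ) : ∀ m : ℕ, (n + 1) * coeff (n + 1) (T ^ m) = m * chooseSub (p * (n + 1)) (n + 1) m := by
  have hrec : ∀ n m, coeff (n + 1) (T ^ (m + 1))
      = ∑ i ∈ Finset.range (p + 1), p.choose i * coeff n (T ^ (m + i)) := by
    intro n m
    have : T ^ (m + 1) = X * ∑ i ∈ Finset.range (p + 1), (p.choose i) • T ^ (m + i) := by
      rw [pow_succ]
      nth_rewrite 2 [hT]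
      rw [add_comm 1 T, add_pow, mul_left_comm, Finset.mul_sum]
      congr 1
      refine Finset.sum_congr rfl fun i _ => ?_
      rw [nsmul_eq_mul, pow_add]; ring
    rw [this, coeff_succ_X_mul, map_sum]
    refine Finset.sum_congr rfl fun i _ => ?_
    rw [map_nsmul, smul_eq_mul]
  have h0 : constantCoeff T = 0 := by rw [hT]; simp
  induction n with
  | zero =>
    intro m
    rcases m with _ | m
    · simp [coeff_one]
    rw [hrec]
    simp only [coeff_zero_eq_constantCoeff, map_pow, h0]
    rcases m with _ | m
    · simp only [zero_add, one_mul]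
      rw [Finset.sum_eq_single 0]
      · simp [chooseSub]
      · intro i _ hi; simp [hi]
      · simp
    · rw [Finset.sum_eq_zero]
      · simp [chooseSub]
      · intro i _; rw [zero_pow (by omega), mul_zero]
  | succ n ih =>
    intro m
    rcases m with _ | m
    · simp [coeff_one]
    rw [hrec]
    have := sum_choose_mul_chooseSub p (p * (n + 1)) (n + 1) m rfl
    apply Nat.eq_of_mul_eq_mul_left (Nat.succ_pos n)
    rw [Nat.succ_eq_add_one, ← this, mul_left_comm, Finset.mul_sum]
    congr 1
    refine Finset.sum_congr rfl fun i _ => ?_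
    rw [← ih, mul_left_comm]

/-! ### Generating functions of combinatorial classes -/

open PowerSeries in
/-- The generating function of the class `{x // P x}` for the size function `w`.
A size attained infinitely often contributes `0`, since `Nat.card` does. -/
noncomputable def classGF {β : Type*} (w : β → ℕ) (P : β → Prop) : PowerSeries ℕ :=
  PowerSeries.mk fun n => Nat.card {x : β // P x ∧ w x = n}

/-- A tuple of total size `n` is a composition `d` of `n` together with components of sizes `d i`. -/
noncomputable def tupleEquiv {ι β : Type*} [Fintype ι] [DecidableEq ι] (w : β → ℕ) (P : ι → β → Prop)
    (n : ℕ) : {f : ι → β // (∀ i, P i (f i)) ∧ ∑ i, w (f i) = n} ≃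
      Σ d : {d : ι →₀ ℕ // d ∈ Finset.finsuppAntidiag Finset.univ n},
        ∀ i, {x : β // P i x ∧ w x = d.1 i} where
  toFun f := ⟨⟨Finsupp.equivFunOnFinite.symm fun i => w (f.1 i), by
      rw [Finset.mem_finsuppAntidiag]; exact ⟨f.2.2, Finset.subset_univ _⟩⟩,
    fun i => ⟨f.1 i, f.2.1 i, rfl⟩⟩
  invFun g := ⟨fun i => (g.2 i).1, fun i => (g.2 i).2.1, by
    exact (Finset.sum_congr rfl fun i _ => (g.2 i).2.2).trans
      (Finset.mem_finsuppAntidiag.1 g.1.2).1⟩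
  left_inv f := rfl
  right_inv := by
    rintro ⟨⟨d, hd⟩, g⟩
    obtain ⟨f, hf, rfl⟩ : ∃ f : ι → β, ∃ hf : ∀ i, P i (f i) ∧ w (f i) = d i,
        g = fun i => ⟨f i, hf i⟩ := ⟨fun i => (g i).1, fun i => (g i).2, rfl⟩
    obtain rfl : d = Finsupp.equivFunOnFinite.symm fun i => w (f i) := by
      ext i; exact (hf i).2.symm
    rfl

open PowerSeries in
lemma card_tuple {ι β : Type*} [Fintype ι] (w : β → ℕ) (P : ι → β → Prop)
    (hfin : ∀ i n, Finite {x : β // P i x ∧ w x = n}) (n : ℕ) :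
    Nat.card {f : ι → β // (∀ i, P i (f i)) ∧ ∑ i, w (f i) = n}
      = coeff n (∏ i, classGF w (P i)) := by
  classical
  rw [Nat.card_congr (tupleEquiv w P n), Nat.card_sigma, PowerSeries.coeff_prod]
  simp_rw [Nat.card_pi, classGF, coeff_mk]
  exact Finset.sum_coe_sort (Finset.finsuppAntidiag Finset.univ n)
    fun d => ∏ i, Nat.card {x : β // P i x ∧ w x = d i}

/-! ### Trees as suffix-closed sets of color words -/

/-- A properly colored tree whose root has color `c`, or the empty tree. A vertex is recorded by
the word of the colors met when climbing from it to the root, the color of the root left out; so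
the root is `[]`, the parent of `a :: l` is `l`, and prepending colors means descending. -/
def IsTree {k : ℕ} (c : Fin k) (T : Finset (List (Fin k))) : Prop :=
  (∀ a l, a :: l ∈ T → l ∈ T) ∧ ∀ l ∈ T, List.IsChain (· ≠ ·) (l ++ [c])

namespace IsTree

variable {k : ℕ} {c : Fin k} {T : Finset (List (Fin k))}

lemma append_mem (hT : IsTree c T) {l₁ l₂ : List (Fin k)} (h : l₁ ++ l₂ ∈ T) : l₂ ∈ T := by
  induction l₁ with
  | nil => exact h
  | cons a l ih => exact ih (hT.1 _ _ h)

lemma nil_mem (hT : IsTree c T) {l : List (Fin k)} (h : l ∈ T) : [] ∈ T :=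
  hT.append_mem (l₁ := l) (by simpa using h)

/-- The suffixes of `l` are `l.length + 1` distinct elements of the tree. -/
lemma length_lt_card (hT : IsTree c T) {l : List (Fin k)} (h : l ∈ T) : l.length < T.card := by
  have := Finset.card_le_card_of_injOn (s := Finset.range (l.length + 1)) (t := T)
    (fun i => l.drop i) (fun i _ => hT.append_mem (l₁ := l.take i) (by simpa using h)) (by
      intro i hi j hj hij
      have := congrArg List.length hij
      simp at hi hj this
      omega)
  simpa using this

end IsTree

lemma finite_trees {k : ℕ} (c : Fin k) (n : ℕ) :
    Finite {T : Finset (List (Fin k)) // IsTree c T ∧ T.card = n} := by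
  let S := (List.finite_length_le (Fin k) n).toFinset
  have : ({T : Finset (List (Fin k)) | IsTree c T ∧ T.card = n} : Set _).Finite := by
    apply S.powerset.finite_toSet.subset
    rintro T ⟨hT, rfl⟩
    simp only [Finset.coe_powerset, Set.mem_preimage, Set.mem_powerset_iff, Finset.coe_subset]
    intro l hl
    simpa [S] using (hT.length_lt_card hl).le
  exact this.to_subtype

/-- The subtree hanging from the child of the root of color `a`; it is empty if there is no
such child. -/
noncomputable def branch {k : ℕ} (T : Finset (List (Fin k))) (a : Fin k) : Finset (List (Fin k)) :=
  T.preimage (· ++ [a]) (List.append_left_injective [a]).injOn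

/-- The tree with root of color `c` and prescribed branches. -/
def graft {k : ℕ} {c : Fin k} (f : {a : Fin k // a ≠ c} → Finset (List (Fin k))) :
    Finset (List (Fin k)) :=
  insert [] (Finset.univ.biUnion fun a => (f a).map ⟨(· ++ [a.1]), List.append_left_injective _⟩)

section graft

variable {k : ℕ} {c : Fin k}

lemma mem_branch {T : Finset (List (Fin k))} {a : Fin k} {l : List (Fin k)} :
    l ∈ branch T a ↔ l ++ [a] ∈ T := Finset.mem_preimage

lemma append_mem_graft {f : {a : Fin k // a ≠ c} → Finset (List (Fin k))} {l : List (Fin k)}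
    {b : Fin k} : l ++ [b] ∈ graft f ↔ ∃ h : b ≠ c, l ∈ f ⟨b, h⟩ := by
  simp only [graft, Finset.mem_insert, List.append_eq_nil_iff, List.cons_ne_self, and_false,
    Finset.mem_biUnion, Finset.mem_univ, true_and, Finset.mem_map, Function.Embedding.coeFn_mk,
    false_or]
  constructor
  · rintro ⟨⟨a, ha⟩, l', hl', h⟩
    obtain ⟨rfl, h2⟩ := List.append_inj' h rfl
    obtain rfl : a = b := by simpa using h2
    exact ⟨ha, hl'⟩
  · rintro ⟨h, hl⟩
    exact ⟨⟨b, h⟩, l, hl, rfl⟩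

lemma nil_mem_graft (f : {a : Fin k // a ≠ c} → Finset (List (Fin k))) : [] ∈ graft f :=
  Finset.mem_insert_self _ _

lemma card_graft (f : {a : Fin k // a ≠ c} → Finset (List (Fin k))) :
    (graft f).card = (∑ a, (f a).card) + 1 := by
  rw [graft, Finset.card_insert_of_notMem, Finset.card_biUnion]
  · simp
  · intro a _ b _ hab
    rw [Function.onFun, Finset.disjoint_left]
    intro x hx hx'
    simp only [Finset.mem_map, Function.Embedding.coeFn_mk] at hx hx'
    obtain ⟨l, -, rfl⟩ := hx
    obtain ⟨l', -, h⟩ := hx'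
    have := (List.append_inj' h rfl).2
    exact hab (Subtype.ext (by simpa using this.symm))
  · simp

lemma IsTree.branch {T : Finset (List (Fin k))} (hT : IsTree c T) (a : Fin k) :
    IsTree a (branch T a) := by
  refine ⟨fun b l h => ?_, fun l h => ?_⟩
  · rw [mem_branch] at h ⊢
    exact hT.1 b _ h
  · rw [mem_branch] at h
    exact (List.isChain_append.1 (hT.2 _ h)).1

lemma IsTree.last_ne {T : Finset (List (Fin k))} (hT : IsTree c T) {l : List (Fin k)} {a : Fin k}
    (h : l ++ [a] ∈ T) : a ≠ c :=
  (List.isChain_append.1 (hT.2 _ h)).2.2 a (by simp) c (by simp)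

lemma isTree_graft {f : {a : Fin k // a ≠ c} → Finset (List (Fin k))}
    (hf : ∀ a, IsTree a.1 (f a)) : IsTree c (graft f) := by
  refine ⟨fun b l h => ?_, fun l h => ?_⟩
  · rcases List.eq_nil_or_concat' l with rfl | ⟨l, a, rfl⟩
    · exact nil_mem_graft f
    · rw [← List.cons_append, append_mem_graft] at h
      rw [append_mem_graft]
      exact ⟨h.1, (hf _).1 _ _ h.2⟩
  · rcases List.eq_nil_or_concat' l with rfl | ⟨l, a, rfl⟩
    · simp
    · obtain ⟨h1, h2⟩ := append_mem_graft.1 h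
      rw [List.isChain_append]
      refine ⟨(hf _).2 _ h2, by simp, ?_⟩
      simpa using h1

lemma graft_branch {T : Finset (List (Fin k))} (hT : IsTree c T) (h0 : [] ∈ T) :
    graft (c := c) (fun a => branch T a.1) = T := by
  ext l
  rcases List.eq_nil_or_concat' l with rfl | ⟨l, a, rfl⟩
  · simp [nil_mem_graft, h0]
  · rw [append_mem_graft]
    simp only [mem_branch]
    exact ⟨fun h => h.2, fun h => ⟨hT.last_ne h, h⟩⟩

lemma branch_graft (f : {a : Fin k // a ≠ c} → Finset (List (Fin k))) (a : {a : Fin k // a ≠ c}) :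
    branch (graft f) a.1 = f a := by
  ext l
  rw [mem_branch, append_mem_graft]
  exact ⟨fun h => h.2, fun h => ⟨a.2, h⟩⟩

/-- A nonempty tree amounts to one possibly empty branch for each color other than that of
the root. -/
noncomputable def treeEquiv (c : Fin k) (n : ℕ) :
    {T : Finset (List (Fin k)) // (IsTree c T ∧ [] ∈ T) ∧ T.card = n + 1} ≃
      {f : {a : Fin k // a ≠ c} → Finset (List (Fin k)) //
        (∀ a, IsTree a.1 (f a)) ∧ ∑ a, (f a).card = n} where
  toFun T := ⟨fun a => branch T.1 a.1, fun a => T.2.1.1.branch a.1, by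
    have h1 := card_graft (c := c) fun a => branch T.1 a.1
    rw [graft_branch T.2.1.1 T.2.1.2, T.2.2] at h1
    exact (Nat.add_right_cancel h1).symm⟩
  invFun f := ⟨graft f.1, ⟨isTree_graft f.2.1, nil_mem_graft f.1⟩, by rw [card_graft, f.2.2]⟩
  left_inv T := Subtype.ext (graft_branch T.2.1.1 T.2.1.2)
  right_inv f := Subtype.ext (funext fun a => branch_graft f.1 a)

end graft

section treeGF

open PowerSeries

/-- The generating function of the nonempty trees with root color `c`. -/
noncomputable def treeGF {k : ℕ} (c : Fin k) : PowerSeries ℕ :=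
  classGF Finset.card fun T => IsTree c T ∧ [] ∈ T

lemma coeff_zero_treeGF {k : ℕ} (c : Fin k) : coeff 0 (treeGF c) = 0 := by
  rw [treeGF, classGF, coeff_mk, Nat.card_eq_zero]
  left
  constructor
  rintro ⟨T, ⟨-, h⟩, h'⟩
  rw [Finset.card_eq_zero] at h'
  simp [h'] at h

lemma classGF_isTree {k : ℕ} (c : Fin k) : classGF Finset.card (IsTree c) = 1 + treeGF c := by
  ext n
  rw [map_add]
  rcases n with _ | n
  · rw [coeff_zero_treeGF, classGF, coeff_mk]
    simp only [coeff_zero_one, add_zero, Nat.card_eq_one_iff_unique]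
    constructor
    · constructor
      rintro ⟨T, -, h⟩ ⟨T', -, h'⟩
      rw [Finset.card_eq_zero] at h h'
      subst h h'
      rfl
    · exact ⟨⟨∅, by simp [IsTree]⟩⟩
  · rw [coeff_one, if_neg (by omega), zero_add, treeGF, classGF, classGF, coeff_mk, coeff_mk]
    refine Nat.card_congr (Equiv.subtypeEquivRight fun T => ?_)
    constructor
    · rintro ⟨h, h'⟩
      obtain ⟨l, hl⟩ : T.Nonempty := by rw [← Finset.card_pos]; omega
      exact ⟨⟨h, h.nil_mem hl⟩, h'⟩
    · rintro ⟨⟨h, -⟩, h'⟩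
      exact ⟨h, h'⟩

lemma coeff_succ_treeGF {k : ℕ} (c : Fin k) (n : ℕ) :
    coeff (n + 1) (treeGF c) = coeff n (∏ a : {a : Fin k // a ≠ c}, (1 + treeGF a.1)) := by
  simp_rw [← classGF_isTree]
  rw [← card_tuple Finset.card (fun (a : {a : Fin k // a ≠ c}) => IsTree a.1)
    (fun a n => finite_trees a.1 n), treeGF, classGF, coeff_mk]
  exact Nat.card_congr (treeEquiv c n)

/-- The number of trees of a given size does not depend on the color of the root: the recursion
always involves `k - 1` branches. -/
lemma treeGF_eq {k : ℕ} (c c' : Fin k) : treeGF c = treeGF c' := by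
  suffices H : ∀ n, ∀ a b : Fin k, coeff n (treeGF a) = coeff n (treeGF b) by
    ext n; exact H n c c'
  intro n
  induction n using Nat.strong_induction_on with
  | _ n ih =>
    rcases n with _ | n
    · intro a b; rw [coeff_zero_treeGF, coeff_zero_treeGF]
    · suffices H : ∀ a, coeff (n + 1) (treeGF a) = coeff n ((1 + treeGF c) ^ (k - 1)) by
        intro a b; rw [H, H]
      intro a
      rw [coeff_succ_treeGF]
      have : (1 + treeGF c) ^ (k - 1) = ∏ _b : {b : Fin k // b ≠ a}, (1 + treeGF c) := by
        rw [Finset.prod_const, Finset.card_univ, Fintype.card_subtype_compl]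
        simp
      rw [this, PowerSeries.coeff_prod, PowerSeries.coeff_prod]
      refine Finset.sum_congr rfl fun d hd => Finset.prod_congr rfl fun b _ => ?_
      have hle : d b ≤ n := by
        rw [← (Finset.mem_finsuppAntidiag.1 hd).1]
        exact Finset.single_le_sum (f := fun b => d b) (fun _ _ => Nat.zero_le _)
          (Finset.mem_univ b)
      rw [map_add, map_add, ih (d b) (by omega) b.1 c]

lemma treeGF_functional_eq {k : ℕ} (c : Fin k) : treeGF c = X * (1 + treeGF c) ^ (k - 1) := by
  ext n
  rcases n with _ | n
  · rw [coeff_zero_treeGF]; simp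
  · rw [coeff_succ_X_mul, coeff_succ_treeGF]
    simp_rw [treeGF_eq _ c]
    rw [Finset.prod_const, Finset.card_univ, Fintype.card_subtype_compl]
    simp

/-- An `m`-tuple of nonempty trees with root colors `c` and `n` vertices in total. -/
def Shape {k m : ℕ} (c : Fin m → Fin k) (n : ℕ) : Type :=
  {f : Fin m → Finset (List (Fin k)) //
    (∀ j, IsTree (c j) (f j) ∧ [] ∈ f j) ∧ ∑ j, (f j).card = n}

lemma finite_nonempty_trees {k : ℕ} (c : Fin k) (n : ℕ) :
    Finite {T : Finset (List (Fin k)) // (IsTree c T ∧ [] ∈ T) ∧ T.card = n} :=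
  have := finite_trees c n
  Finite.of_injective
    (β := {T : Finset (List (Fin k)) // IsTree c T ∧ T.card = n})
    (fun T => ⟨T.1, T.2.1.1, T.2.2⟩) fun _ _ h => Subtype.ext (congrArg (fun x => x.1) h)

lemma finite_shape {k m : ℕ} (c : Fin m → Fin k) (n : ℕ) : Finite (Shape c n) :=
  have := fun (j : Fin m) n => finite_nonempty_trees (c j) n
  Finite.of_equiv _ (tupleEquiv Finset.card (fun (j : Fin m) T => IsTree (c j) T ∧ [] ∈ T) n).symm

lemma card_shape {k m : ℕ} (c : Fin m → Fin k) (c₀ : Fin k) (n : ℕ) :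
    Nat.card (Shape c n) = coeff n (treeGF c₀ ^ m) := by
  have := card_tuple Finset.card (fun (j : Fin m) T => IsTree (c j) T ∧ [] ∈ T)
    (fun j n => finite_nonempty_trees (c j) n) n
  rw [Shape, this]
  change coeff n (∏ j, treeGF (c j)) = _
  simp_rw [treeGF_eq _ c₀]
  simp

end treeGF

/-! ### Words of vertices -/

section At

variable {V : Type*} {k : ℕ}

/-- `IsAt adj r col l v` says that some directed path from `r` to `v` has `l` as the list of the
colors of its vertices other than `r`, read from `v` back towards `r`. -/
def IsAt (adj : V → V → Prop) (r : V) (col : V → Fin k) : List (Fin k) → V → Prop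
  | [], v => v = r
  | a :: l, v => col v = a ∧ ∃ u, IsAt adj r col l u ∧ adj u v

variable {adj : V → V → Prop} {r : V} {col : V → Fin k}

lemma IsAt.exists_path {l : List (Fin k)} {v : V} (h : IsAt adj r col l v) :
    ∃ p : List V, List.IsChain adj p ∧ p.head? = some r ∧ p.getLast? = some v ∧
      p.reverse.map col = l ++ [col r] := by
  induction l generalizing v with
  | nil =>
    obtain rfl : v = r := h
    exact ⟨[v], by simp, rfl, rfl, rfl⟩
  | cons a l ih =>
    obtain ⟨rfl, u, hu, huv⟩ := h
    obtain ⟨p, h1, h2, h3, h4⟩ := ih hu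
    refine ⟨p ++ [v], ?_, ?_, by simp, ?_⟩
    · rw [List.isChain_append]
      refine ⟨h1, by simp, ?_⟩
      rw [h3]
      simpa using huv
    · rw [List.head?_append, h2]; rfl
    · simp [← h4]

lemma exists_isAt_of_path (p : List V) : ∀ v, List.IsChain adj p → p.head? = some r →
    p.getLast? = some v → ∃ l, IsAt adj r col l v := by
  induction p using List.reverseRecOn with
  | nil => simp
  | append_singleton q w ih =>
    intro v h1 h2 h3
    obtain rfl : w = v := by simpa using h3
    rcases List.eq_nil_or_concat' q with rfl | ⟨q', u, rfl⟩
    · exact ⟨[], show w = r by simpa using h2⟩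
    · rw [List.isChain_append] at h1
      obtain ⟨l, hl⟩ := ih u h1.1 (by simpa [List.head?_append] using h2) (by simp)
      exact ⟨col w :: l, rfl, u, hl, h1.2.2 u (by simp) w (by simp)⟩

/-- Paths starting at a root are determined by their end point as soon as roots have no parent
and every vertex has at most one parent. -/
lemma path_unique_of_parent {ι : Type*} {root : ι → V} (hroot : ∀ u j, ¬ adj u (root j))
    (hpar : ∀ u u' v, adj u v → adj u' v → u = u') (p : List V) : ∀ (q : List V) (v : V),
    List.IsChain adj p → (∃ j, p.head? = some (root j)) → p.getLast? = some v →
    List.IsChain adj q → (∃ j, q.head? = some (root j)) → q.getLast? = some v → p = q := by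
  induction p using List.reverseRecOn with
  | nil => simp
  | append_singleton p w ih =>
    rintro q v h1 ⟨j, h2⟩ h3 h4 ⟨j', h5⟩ h6
    obtain rfl : w = v := by simpa using h3
    rcases List.eq_nil_or_concat' q with rfl | ⟨q, w', rfl⟩
    · simp at h6
    obtain rfl : w' = w := by simpa using h6
    rw [List.isChain_append] at h1 h4
    rcases List.eq_nil_or_concat' p with rfl | ⟨p, u, rfl⟩ <;>
      rcases List.eq_nil_or_concat' q with rfl | ⟨q, u', rfl⟩
    · rfl
    · obtain rfl : w' = root j := by simpa using h2
      exact (hroot u' j (h4.2.2 u' (by simp) _ (by simp))).elim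
    · obtain rfl : w' = root j' := by simpa using h5
      exact (hroot u j' (h1.2.2 u (by simp) _ (by simp))).elim
    · obtain rfl : u = u' := hpar _ _ w' (h1.2.2 u (by simp) _ (by simp))
        (h4.2.2 u' (by simp) _ (by simp))
      rw [ih (q ++ [u]) u h1.1 ⟨j, by simpa [List.head?_append] using h2⟩ (by simp) h4.1
        ⟨j', by simpa [List.head?_append] using h5⟩ (by simp)]

lemma IsAt.head_eq {l : List (Fin k)} {v : V} (h : IsAt adj r col l v) :
    l.headD (col r) = col v := by
  cases l with
  | nil => obtain rfl : v = r := h; rfl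
  | cons a l => exact h.1.symm

lemma isChain_cons_append_iff {a c : Fin k} {l : List (Fin k)} :
    List.IsChain (· ≠ ·) (a :: l ++ [c]) ↔
      a ≠ l.headD c ∧ List.IsChain (· ≠ ·) (l ++ [c]) := by
  cases l <;> simp

lemma IsAt.isChain (hcol : ∀ u v, adj u v → col u ≠ col v) {l : List (Fin k)} {v : V}
    (h : IsAt adj r col l v) : List.IsChain (· ≠ ·) (l ++ [col r]) := by
  induction l generalizing v with
  | nil => simp
  | cons a l ih =>
    obtain ⟨rfl, u, hu, huv⟩ := h
    rw [isChain_cons_append_iff, hu.head_eq]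
    exact ⟨(hcol _ _ huv).symm, ih hu⟩

end At

/-! ### Forests up to isomorphism are shapes -/

namespace CForest

variable {k m n : ℕ}

/-- The vertex `v` lies in the tree of the `j`-th root and has the word `l` there. -/
def HasWord (F : CForest k m n) (j : Fin m) (l : List (Fin k)) (v : Fin n) : Prop :=
  IsAt F.adj (F.root j) F.color l v

lemma exists_hasWord (F : CForest k m n) (v : Fin n) :
    ∃ x : Fin m × List (Fin k), F.HasWord x.1 x.2 v := by
  obtain ⟨p, ⟨h1, ⟨j, h2⟩, h3⟩, -⟩ := F.path_unique v
  obtain ⟨l, hl⟩ := exists_isAt_of_path (col := F.color) p v h1 h2 h3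
  exact ⟨(j, l), hl⟩

variable {F G : CForest k m n} {j j' : Fin m} {l l' : List (Fin k)} {u v v' w : Fin n}

lemma HasWord.unique (h : F.HasWord j l v) (h' : F.HasWord j' l' v) : j = j' ∧ l = l' := by
  obtain ⟨p, h1, h2, h3, h4⟩ := IsAt.exists_path h
  obtain ⟨p', h1', h2', h3', h4'⟩ := IsAt.exists_path h'
  obtain rfl : p = p' :=
    (F.path_unique v).unique ⟨h1, ⟨j, h2⟩, h3⟩ ⟨h1', ⟨j', h2'⟩, h3'⟩
  rw [h2] at h2'
  obtain rfl : j = j' := F.root_inj (Option.some.inj h2')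
  rw [h4] at h4'
  exact ⟨rfl, List.append_cancel_right h4'⟩

/-- By injectivity of the coloring, each word leads to at most one vertex. -/
lemma HasWord.vertex_unique (h : F.HasWord j l v) (h' : F.HasWord j l v') : v = v' := by
  induction l generalizing v v' with
  | nil => exact Eq.trans h (Eq.symm h')
  | cons a l ih =>
    obtain ⟨h1, u, hu, huv⟩ := h
    obtain ⟨h1', u', hu', huv'⟩ := h'
    obtain rfl := ih hu hu'
    exact F.color_inj u (Or.inr huv) (Or.inr huv') (h1.trans h1'.symm)

lemma color_ne_of_adj (h : F.adj u v) : F.color u ≠ F.color v := by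
  intro hc
  obtain rfl : u = v := F.color_inj u (Or.inl rfl) (Or.inr h) hc
  obtain ⟨⟨j, l⟩, hl⟩ := F.exists_hasWord u
  -- A loop at `u` would give `u` a second, longer word.
  have : F.HasWord j (F.color u :: l) u := ⟨rfl, u, hl, h⟩
  exact List.cons_ne_self _ _ (this.unique hl).2

/-- The root and the word of a vertex. -/
noncomputable def word (F : CForest k m n) (v : Fin n) : Fin m × List (Fin k) :=
  (F.exists_hasWord v).choose

lemma hasWord_word (F : CForest k m n) (v : Fin n) : F.HasWord (F.word v).1 (F.word v).2 v :=
  (F.exists_hasWord v).choose_spec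

lemma HasWord.word_eq (h : F.HasWord j l v) : F.word v = (j, l) :=
  have := (F.hasWord_word v).unique h
  Prod.ext this.1 this.2

/-- The words of the vertices in the tree of the `j`-th root. -/
noncomputable def words (F : CForest k m n) (j : Fin m) : Finset (List (Fin k)) :=
  (Finset.univ.filter fun v => (F.word v).1 = j).image fun v => (F.word v).2

lemma mem_words : l ∈ F.words j ↔ ∃ v, F.HasWord j l v := by
  simp only [words, Finset.mem_image, Finset.mem_filter, Finset.mem_univ, true_and]
  constructor
  · rintro ⟨v, rfl, rfl⟩
    exact ⟨v, F.hasWord_word v⟩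
  · rintro ⟨v, hv⟩
    exact ⟨v, by rw [hv.word_eq], by rw [hv.word_eq]⟩

lemma sum_card_words (F : CForest k m n) : ∑ j, (F.words j).card = n := by
  have : ∀ j, (F.words j).card = (Finset.univ.filter fun v => (F.word v).1 = j).card := by
    intro j
    apply Finset.card_image_of_injOn
    intro v hv v' hv' h
    simp only [Finset.coe_filter, Finset.mem_univ, true_and, Set.mem_ofPred_eq] at hv hv' h
    have h1 := F.hasWord_word v
    rw [hv, h, ← hv'] at h1
    exact h1.vertex_unique (F.hasWord_word v')
  simp_rw [this]
  rw [← Finset.card_eq_sum_card_fiberwise (fun _ _ => Finset.mem_coe.2 (Finset.mem_univ _))]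
  simp

lemma isTree_words (F : CForest k m n) (j : Fin m) :
    IsTree (F.color (F.root j)) (F.words j) ∧ [] ∈ F.words j := by
  refine ⟨⟨fun a l h => ?_, fun l h => ?_⟩, mem_words.2 ⟨F.root j, rfl⟩⟩
  · obtain ⟨v, -, u, hu, -⟩ := mem_words.1 h
    exact mem_words.2 ⟨u, hu⟩
  · obtain ⟨v, hv⟩ := mem_words.1 h
    exact IsAt.isChain (adj := F.adj) (col := F.color) (fun _ _ h => color_ne_of_adj h) hv

/-- The shape of a forest with root colors `c`. -/
noncomputable def shape {c : Fin m → Fin k}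
    (F : {F : CForest k m n // ∀ j, F.color (F.root j) = c j}) : Shape c n :=
  ⟨F.1.words, fun j => by rw [← F.2 j]; exact F.1.isTree_words j, F.1.sum_card_words⟩

lemma Iso.symm (h : Iso F G) : Iso G F := by
  obtain ⟨e, h1, h2, h3⟩ := h
  refine ⟨e.symm, fun v w => ?_, fun j => ?_, fun v => ?_⟩
  · simp [h1]
  · rw [← h2, e.symm_apply_apply]
  · rw [← h3, e.apply_symm_apply]

lemma Iso.words_subset (h : Iso F G) (j : Fin m) : F.words j ⊆ G.words j := by
  obtain ⟨e, h1, h2, h3⟩ := h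
  have key : ∀ l v, F.HasWord j l v → G.HasWord j l (e v) := by
    intro l
    induction l with
    | nil =>
      intro v hv
      obtain rfl : v = F.root j := hv
      exact h2 j
    | cons a l ih =>
      rintro v ⟨rfl, u, hu, huv⟩
      exact ⟨h3 v, e u, ih u hu, (h1 _ _).1 huv⟩
  intro l hl
  obtain ⟨v, hv⟩ := mem_words.1 hl
  exact mem_words.2 ⟨e v, key l v hv⟩

/-- The isomorphism between two forests with the same words matches vertices with the same
word. -/
lemma iso_of_words_eq (hc : ∀ j, F.color (F.root j) = G.color (G.root j))
    (h : ∀ j, F.words j = G.words j) : Iso F G := by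
  have hex : ∀ v, ∃ v', G.HasWord (F.word v).1 (F.word v).2 v' := fun v => by
    rw [← mem_words, ← h, mem_words]
    exact ⟨v, F.hasWord_word v⟩
  choose e he using hex
  have key : ∀ {j l v}, F.HasWord j l v ↔ G.HasWord j l (e v) := by
    intro j l v
    constructor
    · intro hv
      have := he v
      rwa [hv.word_eq] at this
    · intro hv
      obtain ⟨rfl, rfl⟩ := (he v).unique hv
      exact F.hasWord_word v
  have hinj : Function.Injective e := by
    intro v v' hv
    have h1 := he v
    rw [hv, ← key] at h1
    exact (F.hasWord_word v).vertex_unique h1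
  have hcol : ∀ v, G.color (e v) = F.color v := by
    intro v
    have h1 := IsAt.head_eq (he v)
    have h2 := IsAt.head_eq (F.hasWord_word v)
    rw [← hc] at h1
    exact h1.symm.trans h2
  refine ⟨Equiv.ofBijective e (Finite.injective_iff_bijective.1 hinj), fun u v => ?_,
    fun j => ?_, hcol⟩
  · simp only [Equiv.ofBijective_apply]
    have hu := F.hasWord_word u
    constructor
    · intro huv
      have h1 : F.HasWord _ (F.color v :: _) v := ⟨rfl, u, hu, huv⟩
      obtain ⟨-, u', hu', h2⟩ := key.1 h1
      rwa [← HasWord.vertex_unique hu' (he u)]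
    · intro huv
      have h1 : G.HasWord _ (G.color (e v) :: _) (e v) := ⟨rfl, e u, he u, huv⟩
      obtain ⟨-, u', hu', h2⟩ := key.2 h1
      rwa [← HasWord.vertex_unique hu' hu]
  · have h1 : F.HasWord j [] (F.root j) := rfl
    exact key.1 h1

lemma shape_eq_iff {c : Fin m → Fin k}
    (F G : {F : CForest k m n // ∀ j, F.color (F.root j) = c j}) :
    shape F = shape G ↔ Iso F.1 G.1 := by
  constructor
  · intro h
    exact iso_of_words_eq (fun j => (F.2 j).trans (G.2 j).symm)
      fun j => congrFun (congrArg Subtype.val h) j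
  · intro h
    exact Subtype.ext (funext fun j => (h.words_subset j).antisymm (h.symm.words_subset j))

/-- Every shape is the shape of a forest, whose vertices are the words themselves. -/
lemma shape_surjective (c : Fin m → Fin k) :
    Function.Surjective (shape (c := c) (n := n)) := by
  rintro ⟨s, hs, hn⟩
  obtain ⟨e⟩ : Nonempty (Fin n ≃ Σ j, {l // l ∈ s j}) := by
    refine ⟨(Fintype.equivFinOfCardEq ?_).symm⟩
    simpa using hn
  let adj : Fin n → Fin n → Prop := fun x y =>
    (e x).1 = (e y).1 ∧ ∃ a, (e y).2.1 = a :: (e x).2.1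
  let root : Fin m → Fin n := fun j => e.symm ⟨j, [], (hs j).2⟩
  have hroot : ∀ j, e (root j) = ⟨j, [], (hs j).2⟩ := fun j => e.apply_symm_apply _
  let color : Fin n → Fin k := fun x => (e x).2.1.headD (c (e x).1)
  have ext : ∀ x y, (e x).1 = (e y).1 → (e x).2.1 = (e y).2.1 → x = y := by
    intro x y h1 h2
    apply e.injective
    generalize e x = X at *
    generalize e y = Y at *
    obtain ⟨j, l, hl⟩ := X
    obtain ⟨j', l', hl'⟩ := Y
    obtain rfl : j = j' := h1
    obtain rfl : l = l' := h2
    rfl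
  have hat : ∀ l j (h : l ∈ s j), IsAt adj (root j) color l (e.symm ⟨j, l, h⟩) := by
    intro l
    induction l with
    | nil => intro j h; rfl
    | cons a l ih =>
      intro j h
      refine ⟨?_, e.symm ⟨j, l, (hs j).1.1 a l h⟩, ih j _, ?_⟩
      · simp only [color]
        rw [e.apply_symm_apply]
        rfl
      · simp only [adj]
        rw [e.apply_symm_apply, e.apply_symm_apply]
        exact ⟨rfl, a, rfl⟩
  have hat' : ∀ l j v, IsAt adj (root j) color l v → (e v).1 = j ∧ (e v).2.1 = l := by
    intro l
    induction l with
    | nil =>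
      intro j v h
      obtain rfl : v = root j := h
      rw [hroot]
      exact ⟨rfl, rfl⟩
    | cons a l ih =>
      rintro j v ⟨h, u, hu, h1, b, hb⟩
      obtain ⟨rfl, rfl⟩ := ih j u hu
      refine ⟨h1.symm, ?_⟩
      simp only [color, hb, List.headD_cons] at h
      rw [hb, h]
  have hne : ∀ u v, adj u v → color u ≠ color v := by
    rintro u v ⟨h1, a, ha⟩
    have h2 := (hs (e v).1).1.2 _ (e v).2.2
    rw [ha, isChain_cons_append_iff] at h2
    simp only [color, ha, List.headD_cons, h1]
    exact h2.1.symm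
  let F : CForest k m n :=
    { adj := adj
      root := root
      color := color
      root_inj := by
        intro j j' h
        have := congrArg (fun x => (e x).1) h
        simpa [hroot] using this
      path_unique := by
        intro v
        obtain ⟨p, h1, h2, h3, -⟩ := (hat (e v).2.1 (e v).1 (e v).2.2).exists_path
        refine ⟨p, ⟨h1, ⟨_, h2⟩, by simpa using h3⟩, ?_⟩
        rintro q ⟨h4, h5, h6⟩
        refine path_unique_of_parent ?_ ?_ q p v h4 h5 h6 h1 ⟨_, h2⟩ (by simpa using h3)
        · rintro u j ⟨-, a, ha⟩
          rw [hroot] at ha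
          simp at ha
        · rintro u u' w ⟨h, a, ha⟩ ⟨h', a', ha'⟩
          refine ext _ _ (h.trans h'.symm) ?_
          rw [ha] at ha'
          exact (List.cons.inj ha').2
      color_inj := by
        rintro v x (rfl | hx) y (rfl | hy) hxy
        · rfl
        · exact (hne _ _ hy hxy).elim
        · exact (hne _ _ hx hxy.symm).elim
        · obtain ⟨h1, a, ha⟩ := hx
          obtain ⟨h2, b, hb⟩ := hy
          refine ext _ _ (h1.symm.trans h2) ?_
          simp only [color, ha, hb, List.headD_cons] at hxy
          rw [ha, hb, hxy] }
  refine ⟨⟨F, fun j => by simp only [F, color]; rw [hroot]; rfl⟩, Subtype.ext (funext fun j => ?_)⟩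
  ext l
  refine mem_words.trans ⟨?_, fun h => ⟨_, hat l j h⟩⟩
  rintro ⟨v, hv⟩
  obtain ⟨rfl, rfl⟩ := hat' l j v hv
  exact (e v).2.2

/-- The number of vertices of each color. -/
def colorCount (F : CForest k m n) (i : Fin k) : ℕ :=
  (Finset.univ.filter fun v => F.color v = i).card

lemma Iso.colorCount_eq (h : Iso F G) : F.colorCount = G.colorCount := by
  obtain ⟨e, -, -, h3⟩ := h
  ext i
  refine Finset.card_bij (fun v _ => e v) (fun v hv => ?_) (fun _ _ _ _ h => e.injective h)
    fun w hw => ⟨e.symm w, ?_, e.apply_symm_apply w⟩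
  · simpa [h3] using hv
  · have := h3 (e.symm w)
    rw [e.apply_symm_apply] at this
    simpa [← this] using hw

lemma sum_colorCount (F : CForest k m n) : ∑ i, F.colorCount i = n := by
  unfold colorCount
  rw [← Finset.card_eq_sum_card_fiberwise (fun _ _ => Finset.mem_coe.2 (Finset.mem_univ _))]
  simp

end CForest

/-- The color counts of the forests of a given shape. -/
noncomputable def Shape.colorCount {k m n : ℕ} {c : Fin m → Fin k} (s : Shape c n) : Fin k → ℕ :=
  (CForest.shape_surjective c s).choose.1.colorCount

lemma colorCount_shape {k m n : ℕ} {c : Fin m → Fin k}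
    (F : {F : CForest k m n // ∀ j, F.color (F.root j) = c j}) :
    (CForest.shape F).colorCount = F.1.colorCount :=
  ((CForest.shape_eq_iff _ _).1
    (CForest.shape_surjective c (CForest.shape F)).choose_spec).colorCount_eq

lemma forestCount_eq {k m n : ℕ} (c : Fin m → Fin k) (lam : Fin k → ℕ) (h : ∑ i, lam i = n) :
    forestCount k m lam c = Nat.card {s : Shape c n // s.colorCount = lam} := by
  subst h
  refine Nat.card_congr (Equiv.ofBijective (Quot.lift
    (fun F => ⟨CForest.shape ⟨F.1, F.2.2⟩, ?_⟩) ?_) ⟨?_, ?_⟩)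
  · rw [colorCount_shape]
    exact funext F.2.1
  · intro F G h
    exact Subtype.ext ((CForest.shape_eq_iff _ _).2 h)
  · rintro ⟨F⟩ ⟨G⟩ h
    exact Quot.sound ((CForest.shape_eq_iff _ _).1 (congrArg Subtype.val h))
  · rintro ⟨s, hs⟩
    obtain ⟨F, rfl⟩ := CForest.shape_surjective c s
    rw [colorCount_shape] at hs
    exact ⟨Quot.mk _ ⟨F.1, fun i => congrFun hs i, F.2⟩, rfl⟩

lemma sum_forestCount {k m : ℕ} (c : Fin m → Fin k) (n : ℕ) :
    ∑ lam ∈ Finset.Nat.antidiagonalTuple k n, forestCount k m lam c = Nat.card (Shape c n) := by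
  classical
  have := finite_shape c n
  have := Fintype.ofFinite (Shape c n)
  rw [Nat.card_eq_fintype_card, ← Finset.card_univ,
    Finset.card_eq_sum_card_fiberwise (f := Shape.colorCount)
      (t := Finset.Nat.antidiagonalTuple k n)]
  · refine Finset.sum_congr rfl fun lam hlam => ?_
    rw [forestCount_eq c lam (Finset.Nat.mem_antidiagonalTuple.1 hlam), Nat.card_eq_fintype_card,
      Fintype.card_subtype]
  · intro s _
    rw [Finset.mem_coe, Finset.Nat.mem_antidiagonalTuple]
    exact CForest.sum_colorCount _

theorem statement2 (n k m : ℕ) (hn : 1 ≤ n) (hk : 1 ≤ k) (hm : 1 ≤ m) (c : Fin m → Fin k) :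
    ((∑ lam ∈ Finset.Nat.antidiagonalTuple k n, forestCount k m lam c : ℕ) : ℚ)
        = ((m : ℚ) / (n : ℚ)) * chooseZ (k * n - n) ((n : ℤ) - (m : ℤ)) ∧
    (2 ≤ k → m ≤ n →
      ((∑ lam ∈ Finset.Nat.antidiagonalTuple k n, forestCount k m lam c : ℕ) : ℚ)
        = fussCat (n - m) (k - 1) ((k - 1) * m)) := by
  have hn0 : (n : ℚ) ≠ 0 := by exact_mod_cast (by omega : n ≠ 0)
  have main : (n : ℚ) * ((∑ lam ∈ Finset.Nat.antidiagonalTuple k n, forestCount k m lam c : ℕ) : ℚ)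
      = m * (chooseSub ((k - 1) * n) n m : ℕ) := by
    obtain ⟨n, rfl⟩ := Nat.exists_eq_add_of_le' hn
    rw [sum_forestCount, card_shape c (c ⟨0, hm⟩)]
    exact_mod_cast coeff_pow_of_functional_eq (k - 1) _ (treeGF_functional_eq (c ⟨0, hm⟩)) n m
  rw [mul_comm, ← eq_div_iff hn0] at main
  refine ⟨?_, fun hk2 hmn => ?_⟩
  · have : (chooseSub ((k - 1) * n) n m : ℚ) = chooseZ (k * n - n) ((n : ℤ) - (m : ℤ)) := by
      unfold chooseSub chooseZ
      by_cases h : m ≤ n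
      · rw [if_pos h, if_pos (by omega), Nat.sub_mul, one_mul,
          show ((n : ℤ) - (m : ℤ)).toNat = n - m by omega]
      · rw [if_neg h, if_neg (by omega)]; simp
    rw [main, this]; ring
  · have hp : ((k - 1 : ℕ) : ℚ) ≠ 0 := by exact_mod_cast (by omega : k - 1 ≠ 0)
    have e : (n - m) * (k - 1) + (k - 1) * m = (k - 1) * n := by
      rw [mul_comm, ← mul_add, Nat.sub_add_cancel hmn]
    rw [main, fussCat, e, chooseSub, if_pos hmn]
    push_cast
    rw [mul_div_mul_left _ _ hp]
    ring
end
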